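/- arXiv:2105.08029 — 2 statements merged into one kernel-verified Lean document; each statement's English description precedes it below -/
import Mathlib

section
/- Let 1 < p < ∞, let ω be a radial weight in the class D̂, and let ν be a radial weight. If the Bergman projection P_ω is bounded on L^p_ν, then A_p(ω,ν) < ∞. -/
open MeasureTheory Set Metric
open scoped ENNReal NNReal

noncomputable section

/-- `ω̂(r) = ∫_r^1 ω(s) ds`. -/
def hatw (w : ℝ → ℝ) (r : ℝ) : ℝ := ∫ s in Set.Ioo r 1, w s

/-- `ω̂₁(r) = ∫_r^1 s ω(s) ds`. -/
def hat1 (w : ℝ → ℝ) (r : ℝ) : ℝ := ∫ s in Set.Ioo r 1, s * w s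

/-- A radial weight: nonnegative, integrable on `[0,1)`, with `ω̂(r) > 0` for `0 ≤ r < 1`. -/
def IsRadialWeight (w : ℝ → ℝ) : Prop :=
  (∀ r ∈ Set.Ico (0:ℝ) 1, 0 ≤ w r) ∧ MeasureTheory.IntegrableOn w (Set.Ico (0:ℝ) 1) ∧
    ∀ r ∈ Set.Ico (0:ℝ) 1, 0 < hatw w r

/-- The class `D̂`: `sup_{0 ≤ r < 1} ω̂(r)/ω̂((1+r)/2) < ∞`. -/
def Dhat (w : ℝ → ℝ) : Prop :=
  ∃ C : ℝ, ∀ r ∈ Set.Ico (0:ℝ) 1, hatw w r ≤ C * hatw w ((1 + r) / 2)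

/-- The odd moment `ω_{2n+1} = ∫₀¹ r^{2n+1} ω(r) dr`. -/
def moment (w : ℝ → ℝ) (n : ℕ) : ℝ := ∫ r in Set.Ioo (0:ℝ) 1, r ^ (2 * n + 1) * w r

/-- The Bergman reproducing kernel `B_z^ω(ζ) = Σ_n (conj z · ζ)^n / (2 ω_{2n+1})`. -/
def Bker (w : ℝ → ℝ) (z ζ : ℂ) : ℂ :=
  ∑' n : ℕ, ((starRingEnd ℂ) z * ζ) ^ n / ((2 * moment w n : ℝ) : ℂ)

/-- The `L^p_ν` norm (with `dA` = area measure divided by `π`) of a complex-valued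
function on the unit disc. -/
def LpC (p : ℝ) (v : ℝ → ℝ) (f : ℂ → ℂ) : ℝ≥0∞ :=
  ((∫⁻ z in Metric.ball (0:ℂ) 1, ENNReal.ofReal (‖f z‖ ^ p * v ‖z‖)) /
    ENNReal.ofReal Real.pi) ^ (1 / p)

/-- The Bergman projection `P_ω(f)(z) = ∫_𝔻 f(ζ) conj(B_z^ω(ζ)) ω(ζ) dA(ζ)`. -/
def Pw (w : ℝ → ℝ) (f : ℂ → ℂ) (z : ℂ) : ℂ :=
  (∫ ζ in Metric.ball (0:ℂ) 1, f ζ * (starRingEnd ℂ) (Bker w z ζ) * ((w ‖ζ‖ : ℝ) : ℂ)) /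
    ((Real.pi : ℝ) : ℂ)

/-- `P_ω` is bounded on `L^p_ν`: for every `f ∈ L^p_ν` the defining integral converges
absolutely for a.e. `z ∈ 𝔻` and `‖P_ω f‖_{L^p_ν} ≤ C ‖f‖_{L^p_ν}`. -/
def PwBounded (p : ℝ) (w v : ℝ → ℝ) : Prop :=
  ∃ C > (0:ℝ), ∀ f : ℂ → ℂ, Measurable f → LpC p v f < ⊤ →
    (∀ᵐ z ∂(volume.restrict (Metric.ball (0:ℂ) 1)),
      (∫⁻ ζ in Metric.ball (0:ℂ) 1, ENNReal.ofReal (‖f ζ‖ * ‖Bker w z ζ‖ * w ‖ζ‖)) < ⊤) ∧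
    LpC p v (Pw w f) ≤ ENNReal.ofReal C * LpC p v f

/-- `σ(s) = (ω(s)/ν(s)^{1/p})^{p'}`, as an extended nonnegative real (so `σ(s) = ∞`
when `ν(s) = 0 < ω(s)`). -/
def sigmaE (p : ℝ) (w v : ℝ → ℝ) (s : ℝ) : ℝ≥0∞ :=
  (ENNReal.ofReal (w s) / ENNReal.ofReal (v s) ^ (1 / p)) ^ (p / (p - 1))

/-- The Muckenhoupt-type quantity
`A_p(ω,ν) = sup_{0 ≤ r < 1} ν̂₁(r)^{1/p} σ̂₁(r)^{1/p'} / ω̂₁(r)` (note `1/p' = 1 - 1/p`). -/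
def ApE (p : ℝ) (w v : ℝ → ℝ) : ℝ≥0∞ :=
  ⨆ r ∈ Set.Ico (0:ℝ) 1,
    (∫⁻ s in Set.Ioo r 1, ENNReal.ofReal (s * v s)) ^ (1 / p) *
      (∫⁻ s in Set.Ioo r 1, ENNReal.ofReal s * sigmaE p w v s) ^ (1 - 1 / p) /
      ENNReal.ofReal (hat1 w r)

/-!
On a function `f ζ = ζ ^ n * h |ζ|` the Bergman projection acts diagonally: by rotation invariance
`P_ω f` is `z ^ n` times `ω_{2n+1}⁻¹ ∫₀¹ s ^ (2n+1) h(s) ω(s) ds`. Let `h` be supported in `(r, 1)`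
and let `n` be of the size of `1 / (1 - r)`. Then `s ^ n` is bounded below on `(r, 1)`, while the
doubling condition `D̂` gives `ω_{2n+1} ≲ ω̂₁(r)`, so boundedness of `P_ω` on such `f` reads
`ν̂₁(r)^{1/p} ∫_r^1 h ω s ds ≲ ω̂₁(r) (∫_r^1 h ^ p ν s ds)^{1/p}`.
The supremum over `h` is `σ̂₁(r)^{1/p'}` by the converse of Hölder's inequality.
-/

section RadialIntegration

lemma lintegral_fun_norm_addHaar {E : Type*} [NormedAddCommGroup E] [NormedSpace ℝ E]
    [Nontrivial E] [FiniteDimensional ℝ E] [MeasurableSpace E] [BorelSpace E]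
    (μ : Measure E) [μ.IsAddHaarMeasure] {f : ℝ → ℝ≥0∞} (hf : Measurable f) :
    ∫⁻ x, f ‖x‖ ∂μ = Module.finrank ℝ E * μ (ball 0 1) *
      ∫⁻ r in Ioi (0 : ℝ), ENNReal.ofReal (r ^ (Module.finrank ℝ E - 1)) * f r := by
  calc
    ∫⁻ x, f ‖x‖ ∂μ = ∫⁻ x : ({0}ᶜ : Set E), f ‖x.1‖ ∂(μ.comap (↑)) := by
      rw [lintegral_subtype_comap (measurableSet_singleton _).compl fun x ↦ f ‖x‖,
        restrict_compl_singleton]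
    _ = ∫⁻ x, f x.2 ∂μ.toSphere.prod (.volumeIoiPow (Module.finrank ℝ E - 1)) := by
      simpa using μ.measurePreserving_homeomorphUnitSphereProd.lintegral_comp_emb
        (Homeomorph.measurableEmbedding _) (f ∘ Subtype.val ∘ Prod.snd)
    _ = μ.toSphere univ * ∫⁻ r : Ioi (0 : ℝ), f r ∂.volumeIoiPow (Module.finrank ℝ E - 1) := by
      rw [lintegral_prod _ (by fun_prop)]
      simp only [lintegral_const, mul_comm]
    _ = _ := by
      rw [μ.toSphere_apply_univ, Measure.volumeIoiPow,
        lintegral_withDensity_eq_lintegral_mul _ (by fun_prop) (by fun_prop)]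
      congr 1
      exact lintegral_subtype_comap measurableSet_Ioi
        fun r ↦ ENNReal.ofReal (r ^ (Module.finrank ℝ E - 1)) * f r

/-- The measure `s ds` on `(0, 1)`. Up to the factor `2π` it is the image of the area measure on
the unit disc under `z ↦ ‖z‖`, see `measurePreserving_norm_ball`. -/
def radialMeasure : Measure ℝ :=
  (volume.restrict (Ioo 0 1)).withDensity ENNReal.ofReal

lemma radialMeasure_le : radialMeasure ≤ volume.restrict (Ioo 0 1) := by
  conv_rhs => rw [← withDensity_one (μ := volume.restrict (Ioo (0 : ℝ) 1))]
  exact withDensity_mono ((ae_restrict_mem measurableSet_Ioo).mono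
    fun s hs ↦ ENNReal.ofReal_le_one.2 hs.2.le)

instance : IsFiniteMeasure radialMeasure :=
  isFiniteMeasure_of_le _ radialMeasure_le

lemma radialMeasure_absolutelyContinuous :
    radialMeasure ≪ volume.restrict (Ioo (0 : ℝ) 1) :=
  withDensity_absolutelyContinuous _ _

lemma ae_radialMeasure_mem_Ioo : ∀ᵐ s ∂radialMeasure, s ∈ Ioo (0 : ℝ) 1 :=
  radialMeasure_absolutelyContinuous.ae_le (ae_restrict_mem measurableSet_Ioo)

lemma setLIntegral_radialMeasure_Ioi {r : ℝ} (hr : 0 ≤ r) (f : ℝ → ℝ≥0∞) :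
    ∫⁻ s in Ioi r, f s ∂radialMeasure = ∫⁻ s in Ioo r 1, ENNReal.ofReal s * f s := by
  rw [radialMeasure, restrict_withDensity measurableSet_Ioi,
    Measure.restrict_restrict measurableSet_Ioi, Ioi_inter_Ioo, max_eq_left hr,
    lintegral_withDensity_eq_lintegral_mul_non_measurable _ (by fun_prop)
      (.of_forall fun _ ↦ ENNReal.ofReal_lt_top)]
  rfl

lemma measurePreserving_norm_ball :
    MeasurePreserving (fun z : ℂ ↦ ‖z‖) (volume.restrict (ball 0 1))
      (ENNReal.ofReal (2 * Real.pi) • radialMeasure) := by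
  refine ⟨measurable_norm, Measure.ext_of_lintegral _ fun f hf ↦ ?_⟩
  have hball (z : ℂ) : (ball (0 : ℂ) 1).indicator (fun z ↦ f ‖z‖) z =
      (Iio 1).indicator f ‖z‖ := by
    simp [indicator]
  have hmul : (fun r ↦ ENNReal.ofReal r * (Iio 1).indicator f r) =
      (Iio 1).indicator fun r ↦ ENNReal.ofReal r * f r := by
    ext r; simp [indicator]
  rw [lintegral_map hf measurable_norm, ← lintegral_indicator measurableSet_ball]
  simp_rw [hball]
  rw [lintegral_fun_norm_addHaar _ (hf.indicator measurableSet_Iio), lintegral_smul_measure,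
    radialMeasure, lintegral_withDensity_eq_lintegral_mul _ (by fun_prop) hf]
  simp only [Complex.finrank_real_complex, Complex.volume_ball, Nat.add_one_sub_one, pow_one, hmul,
    setLIntegral_indicator measurableSet_Iio, Iio_inter_Ioi, smul_eq_mul, Pi.mul_apply]
  congr 1
  rw [ENNReal.ofReal_mul two_pos.le]
  simp [← NNReal.coe_real_pi]

lemma lintegral_ball_comp_norm {f : ℝ → ℝ≥0∞} (hf : AEMeasurable f radialMeasure) :
    ∫⁻ z in ball (0 : ℂ) 1, f ‖z‖ = ENNReal.ofReal (2 * Real.pi) * ∫⁻ s, f s ∂radialMeasure := by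
  have h := measurePreserving_norm_ball
  rw [← lintegral_map' (by rw [h.map_eq]; exact hf.smul_measure _) (by fun_prop), h.map_eq,
    lintegral_smul_measure, smul_eq_mul]

lemma integral_ball_comp_norm {f : ℝ → ℝ} (hf : AEStronglyMeasurable f radialMeasure) :
    ∫ z in ball (0 : ℂ) 1, f ‖z‖ = 2 * Real.pi * ∫ s, f s ∂radialMeasure := by
  have h := measurePreserving_norm_ball
  rw [← integral_map (by fun_prop) (by rw [h.map_eq]; exact hf.smul_measure _), h.map_eq,
    integral_smul_measure, ENNReal.toReal_ofReal (by positivity), smul_eq_mul]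

lemma integrableOn_ball_comp_norm {f : ℝ → ℝ} (hf : Integrable f radialMeasure) :
    IntegrableOn (fun z : ℂ ↦ f ‖z‖) (ball 0 1) :=
  measurePreserving_norm_ball.integrable_comp_of_integrable
    (hf.smul_measure ENNReal.ofReal_ne_top)

lemma setIntegral_ball_eq_zero_of_rotation {f : ℂ → ℂ} {u : Circle} {c : ℂ} (hc : c ≠ 1)
    (hf : ∀ z, f (u * z) = c * f z) (R : ℝ) : ∫ z in ball (0 : ℂ) R, f z = 0 := by
  have hrot := (rotation u).measurePreserving.setIntegral_preimage_emb
    (rotation u).toHomeomorph.measurableEmbedding f (ball 0 R)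
  rw [LinearIsometryEquiv.preimage_ball, map_zero] at hrot
  simp only [rotation_apply, hf, integral_const_mul] at hrot
  exact (mul_left_eq_self₀.1 hrot).resolve_left hc

lemma setIntegral_ball_pow_mul_conj_pow_mul_radial_eq_zero {n k : ℕ} (hnk : n ≠ k) (g : ℝ → ℂ)
    (R : ℝ) : ∫ z in ball (0 : ℂ) R, z ^ n * (starRingEnd ℂ z) ^ k * g ‖z‖ = 0 := by
  have hd : (n : ℂ) - k ≠ 0 := sub_ne_zero.2 (by exact_mod_cast hnk)
  refine setIntegral_ball_eq_zero_of_rotation (u := Circle.exp (Real.pi / (n - k))) (c := -1)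
    (by norm_num) (fun z ↦ ?_) R
  have hu : (Circle.exp (Real.pi / (n - k)) : ℂ) ^ n *
      (starRingEnd ℂ (Circle.exp (Real.pi / (n - k)) : ℂ)) ^ k = -1 := by
    rw [← Circle.coe_inv_eq_conj, ← Circle.exp_neg, Circle.coe_exp, Circle.coe_exp,
      ← Complex.exp_nat_mul, ← Complex.exp_nat_mul, ← Complex.exp_add, ← Complex.exp_pi_mul_I]
    congr 1
    push_cast
    field_simp
    ring
  rw [map_mul, mul_pow, mul_pow, norm_mul, Circle.norm_coe, one_mul, ← hu]
  ring

end RadialIntegration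

section ConverseHolder

open Filter Topology

/-- A bounded approximation of `(a / b) ^ q`. For `q = 1 / (p - 1)` the latter, as a function of
`a` and `b`, is extremal in Hölder's inequality for pairing with `a` against the weight `b`; the
parameter `k` truncates `a` from above and keeps the denominator away from `0`. -/
def truncatedExtremal (q : ℝ) (k : ℕ) (a b : ℝ≥0) : ℝ≥0 :=
  (min a k / (b + ((k : ℝ≥0) + 1)⁻¹)) ^ q

lemma truncatedExtremal_le {q : ℝ} (hq : 0 ≤ q) (k : ℕ) (a b : ℝ≥0) :
    truncatedExtremal q k a b ≤ (k * (k + 1)) ^ q := by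
  refine NNReal.rpow_le_rpow ?_ hq
  calc min a k / (b + ((k : ℝ≥0) + 1)⁻¹) ≤ k / ((k : ℝ≥0) + 1)⁻¹ := by
        gcongr
        · exact min_le_right _ _
        · exact le_add_self
    _ = k * (k + 1) := div_inv_eq_mul _ _

lemma truncatedExtremal_rpow_mul_le {p : ℝ} (hp : 1 < p) (k : ℕ) (a b : ℝ≥0) :
    truncatedExtremal (1 / (p - 1)) k a b ^ p * b ≤
      truncatedExtremal (1 / (p - 1)) k a b * min a k := by
  set g := truncatedExtremal (1 / (p - 1)) k a b with hg
  have hgpow : g ^ (p - 1) * b ≤ min a k := by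
    rw [hg, truncatedExtremal, ← NNReal.rpow_mul, one_div_mul_cancel (by linarith),
      NNReal.rpow_one, div_mul_eq_mul_div]
    refine div_le_of_le_mul₀ zero_le zero_le ?_
    gcongr
    exact le_self_add
  calc g ^ p * b = g * (g ^ (p - 1) * b) := by
        rw [← mul_assoc, ← NNReal.rpow_one_add' (by linarith)]
        ring_nf
    _ ≤ g * min a k := by gcongr

lemma div_rpow_mul_self {p : ℝ} (hp : 1 < p) (a b : ℝ≥0∞) :
    (a / b) ^ (1 / (p - 1)) * a = (a / b ^ (1 / p)) ^ (p / (p - 1)) := by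
  have hq : 0 < p - 1 := sub_pos.2 hp
  rw [ENNReal.div_rpow_of_nonneg _ _ (by positivity),
    ENNReal.div_rpow_of_nonneg _ _ (by positivity),
    ← ENNReal.rpow_mul, show 1 / p * (p / (p - 1)) = 1 / (p - 1) by field_simp,
    show p / (p - 1) = 1 / (p - 1) + 1 by field_simp; ring,
    ENNReal.rpow_add_of_nonneg _ _ (by positivity) zero_le_one, ENNReal.rpow_one,
    ENNReal.mul_div_right_comm]

lemma tendsto_truncatedExtremal_mul {q : ℝ} (hq : 0 < q) (a b : ℝ≥0) :
    Tendsto (fun k : ℕ ↦ ((truncatedExtremal q k a b * min a k : ℝ≥0) : ℝ≥0∞)) atTop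
      (𝓝 (((a : ℝ≥0∞) / b) ^ q * a)) := by
  rcases eq_or_ne a 0 with rfl | ha
  · simp [truncatedExtremal, hq.ne']
  have hmin : Tendsto (fun k : ℕ ↦ ((min a k : ℝ≥0) : ℝ≥0∞)) atTop (𝓝 a) := by
    refine tendsto_const_nhds.congr' ?_
    filter_upwards [eventually_ge_atTop ⌈a⌉₊] with k hk
    rw [min_eq_left (Nat.ceil_le.1 hk)]
  have hden : Tendsto (fun k : ℕ ↦ ((b + ((k : ℝ≥0) + 1)⁻¹ : ℝ≥0) : ℝ≥0∞)) atTop (𝓝 b) := by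
    rw [ENNReal.tendsto_coe]
    simpa using (tendsto_one_div_add_atTop_nhds_zero_nat (𝕜 := ℝ≥0)).const_add b
  have hdiv := ENNReal.Tendsto.div hmin (.inl (by simpa)) hden (.inr ENNReal.coe_ne_top)
  have hmul := ENNReal.Tendsto.mul (((ENNReal.continuous_rpow_const (y := q)).tendsto _).comp hdiv)
    (.inr ENNReal.coe_ne_top) hmin (.inl (by simpa))
  refine hmul.congr fun k ↦ ?_
  have hpos : b + ((k : ℝ≥0) + 1)⁻¹ ≠ 0 := by positivity
  simp only [truncatedExtremal, Function.comp_apply, ENNReal.coe_mul,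
    ENNReal.coe_rpow_of_nonneg _ hq.le, ENNReal.coe_div hpos]

lemma rpow_one_sub_le_of_le_mul_rpow {p : ℝ} (hp : 1 < p) {x K : ℝ≥0∞} (hx : x ≠ ⊤)
    (h : x ≤ K * x ^ (1 / p)) : x ^ (1 - 1 / p) ≤ K := by
  rcases eq_or_ne x 0 with rfl | hx0
  · have hpos : 0 < 1 - 1 / p := sub_pos.2 ((div_lt_one (zero_lt_one.trans hp)).2 hp)
    rw [ENNReal.zero_rpow_of_pos hpos]
    exact zero_le
  · rw [ENNReal.rpow_sub _ _ hx0 hx, ENNReal.rpow_one]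
    exact ENNReal.div_le_of_le_mul h

lemma lintegral_rpow_le_of_tendsto {α : Type*} [MeasurableSpace α] {μ : Measure α} {q : ℝ}
    (hq : 0 ≤ q) {F : ℕ → α → ℝ≥0∞} {G : α → ℝ≥0∞} {K : ℝ≥0∞} (hF : ∀ k, Measurable (F k))
    (hFG : ∀ x, Tendsto (F · x) atTop (𝓝 (G x))) (hK : ∀ k, (∫⁻ x, F k x ∂μ) ^ q ≤ K) :
    (∫⁻ x, G x ∂μ) ^ q ≤ K := by
  calc (∫⁻ x, G x ∂μ) ^ q ≤ (liminf (fun k ↦ ∫⁻ x, F k x ∂μ) atTop) ^ q := by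
        gcongr
        simpa only [(hFG _).liminf_eq] using lintegral_liminf_le hF (u := atTop) (μ := μ)
    _ = liminf (fun k ↦ (∫⁻ x, F k x ∂μ) ^ q) atTop := by
        exact (ENNReal.monotone_rpow_of_nonneg hq).map_liminf_of_continuousAt _
          ENNReal.continuous_rpow_const.continuousAt
    _ ≤ K := liminf_le_of_frequently_le' (.of_forall hK)

variable {α : Type*} [MeasurableSpace α] {μ : Measure α} [IsFiniteMeasure μ] {p : ℝ}

lemma lintegral_truncatedExtremal_mul_rpow_le (hp : 1 < p) {a b : α → ℝ≥0} (ha : Measurable a)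
    (hb : Measurable b) {K : ℝ≥0∞}
    (h : ∀ g : α → ℝ≥0, Measurable g → (∃ M, ∀ x, g x ≤ M) →
      ∫⁻ x, g x * a x ∂μ ≤ K * (∫⁻ x, (g x : ℝ≥0∞) ^ p * b x ∂μ) ^ (1 / p)) (k : ℕ) :
    (∫⁻ x, ((truncatedExtremal (1 / (p - 1)) k (a x) (b x) * min (a x) k : ℝ≥0) : ℝ≥0∞) ∂μ) ^
      (1 - 1 / p) ≤ K := by
  have hq : 0 < 1 / (p - 1) := one_div_pos.2 (sub_pos.2 hp)
  set g : α → ℝ≥0 := fun x ↦ truncatedExtremal (1 / (p - 1)) k (a x) (b x) with hg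
  have hgm : Measurable g := by
    simp only [hg, truncatedExtremal]
    fun_prop
  have hgM (x : α) : g x ≤ (k * (k + 1)) ^ (1 / (p - 1)) := truncatedExtremal_le hq.le k _ _
  refine rpow_one_sub_le_of_le_mul_rpow hp ?_ ?_
  · refine ne_of_lt (IsFiniteMeasure.lintegral_lt_top_of_bounded_to_ennreal μ
      ⟨(k * (k + 1)) ^ (1 / (p - 1)) * k, fun x ↦ ENNReal.coe_le_coe.2 ?_⟩)
    exact mul_le_mul' (hgM x) (min_le_right _ _)
  · calc ∫⁻ x, ((g x * min (a x) k : ℝ≥0) : ℝ≥0∞) ∂μ ≤ ∫⁻ x, g x * a x ∂μ := by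
          refine lintegral_mono fun x ↦ ?_
          rw [ENNReal.coe_mul]
          gcongr
          exact min_le_left _ _
      _ ≤ K * (∫⁻ x, (g x : ℝ≥0∞) ^ p * b x ∂μ) ^ (1 / p) := h g hgm ⟨_, hgM⟩
      _ ≤ K * (∫⁻ x, ((g x * min (a x) k : ℝ≥0) : ℝ≥0∞) ∂μ) ^ (1 / p) := by
          gcongr with x
          rw [← ENNReal.coe_rpow_of_nonneg _ (by linarith), ← ENNReal.coe_mul]
          exact ENNReal.coe_le_coe.2 (truncatedExtremal_rpow_mul_le hp k _ _)

theorem lintegral_div_rpow_rpow_le_of_forall_lintegral_mul_le (hp : 1 < p) {a b : α → ℝ≥0}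
    (ha : AEMeasurable a μ) (hb : AEMeasurable b μ) {K : ℝ≥0∞}
    (h : ∀ g : α → ℝ≥0, Measurable g → (∃ M, ∀ x, g x ≤ M) →
      ∫⁻ x, g x * a x ∂μ ≤ K * (∫⁻ x, (g x : ℝ≥0∞) ^ p * b x ∂μ) ^ (1 / p)) :
    (∫⁻ x, ((a x : ℝ≥0∞) / (b x : ℝ≥0∞) ^ (1 / p)) ^ (p / (p - 1)) ∂μ) ^ (1 - 1 / p) ≤ K := by
  have hq : 0 < 1 / (p - 1) := one_div_pos.2 (sub_pos.2 hp)
  wlog hab : Measurable a ∧ Measurable b generalizing a b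
  · obtain ⟨a', ha', haa'⟩ := ha
    obtain ⟨b', hb', hbb'⟩ := hb
    convert this ha'.aemeasurable hb'.aemeasurable (fun g hg hgM ↦ ?_) ⟨ha', hb'⟩ using 2
    · exact lintegral_congr_ae (by filter_upwards [haa', hbb'] with x hax hbx; rw [hax, hbx])
    · rw [← lintegral_congr_ae (haa'.mono fun x hx ↦ congrArg (fun c : ℝ≥0 ↦ (g x * c : ℝ≥0∞)) hx),
        ← lintegral_congr_ae (hbb'.mono fun x hx ↦
          congrArg (fun c : ℝ≥0 ↦ ((g x : ℝ≥0∞) ^ p * c : ℝ≥0∞)) hx)]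
      exact h g hg hgM
  obtain ⟨ha, hb⟩ := hab
  simp only [← div_rpow_mul_self hp]
  refine lintegral_rpow_le_of_tendsto (sub_nonneg.2 ((div_le_one (by linarith)).2 hp.le))
    (fun k ↦ ?_) (fun x ↦ tendsto_truncatedExtremal_mul hq (a x) (b x))
    (lintegral_truncatedExtremal_mul_rpow_le hp ha hb h)
  simp only [truncatedExtremal]
  fun_prop

end ConverseHolder

section RadialWeight

/-- The moment `ω_N = ∫₀¹ s^N ω(s) ds`, so that `moment w n` is `natMoment w (2 * n + 1)` by
definition. All exponents are needed to compare moments along dyadic scales. -/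
def natMoment (w : ℝ → ℝ) (N : ℕ) : ℝ := ∫ s in Ioo (0 : ℝ) 1, s ^ N * w s

namespace IsRadialWeight

variable {w : ℝ → ℝ}

lemma nonneg_of_mem_Ioo (hw : IsRadialWeight w) {r s : ℝ} (hr : 0 ≤ r) (hs : s ∈ Ioo r 1) :
    0 ≤ w s :=
  hw.1 s ⟨hr.trans hs.1.le, hs.2⟩

lemma integrableOn_Ioo (hw : IsRadialWeight w) {r : ℝ} (hr : 0 ≤ r) : IntegrableOn w (Ioo r 1) :=
  hw.2.1.mono_set fun _ hs ↦ ⟨hr.trans hs.1.le, hs.2⟩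

lemma integrableOn_pow_mul (hw : IsRadialWeight w) (N : ℕ) {r : ℝ} (hr : 0 ≤ r) :
    IntegrableOn (fun s ↦ s ^ N * w s) (Ioo r 1) := by
  refine Integrable.bdd_mul (c := 1) (hw.integrableOn_Ioo hr) (by fun_prop) ?_
  filter_upwards [ae_restrict_mem measurableSet_Ioo] with s hs
  have hs0 : 0 ≤ s := hr.trans hs.1.le
  rw [Real.norm_of_nonneg (pow_nonneg hs0 N)]
  exact pow_le_one₀ hs0 hs.2.le

lemma integrable_radialMeasure (hw : IsRadialWeight w) : Integrable w radialMeasure :=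
  Integrable.mono_measure (hw.integrableOn_Ioo le_rfl) radialMeasure_le

lemma hatw_antitoneOn (hw : IsRadialWeight w) : AntitoneOn (hatw w) (Ico 0 1) := by
  intro r hr t _ hrt
  refine setIntegral_mono_set (hw.integrableOn_Ioo hr.1) ?_ (Ioo_subset_Ioo_left hrt).eventuallyLE
  filter_upwards [ae_restrict_mem measurableSet_Ioo] with s hs
  exact hw.nonneg_of_mem_Ioo hr.1 hs

lemma hat1_antitoneOn (hw : IsRadialWeight w) : AntitoneOn (hat1 w) (Ico 0 1) := by
  intro r hr t _ hrt
  refine setIntegral_mono_set (by simpa using hw.integrableOn_pow_mul 1 hr.1) ?_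
    (Ioo_subset_Ioo_left hrt).eventuallyLE
  filter_upwards [ae_restrict_mem measurableSet_Ioo] with s hs
  exact mul_nonneg (hr.1.trans hs.1.le) (hw.nonneg_of_mem_Ioo hr.1 hs)

lemma mul_hatw_le_hat1 (hw : IsRadialWeight w) {r : ℝ} (hr : 0 ≤ r) :
    r * hatw w r ≤ hat1 w r := by
  rw [hatw, ← integral_const_mul]
  refine setIntegral_mono_on ((hw.integrableOn_Ioo hr).const_mul r)
    (by simpa using hw.integrableOn_pow_mul 1 hr) measurableSet_Ioo fun s hs ↦ ?_
  exact mul_le_mul_of_nonneg_right hs.1.le (hw.nonneg_of_mem_Ioo hr hs)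

lemma natMoment_antitone (hw : IsRadialWeight w) : Antitone (natMoment w) := by
  intro M N hMN
  refine setIntegral_mono_on (hw.integrableOn_pow_mul N le_rfl) (hw.integrableOn_pow_mul M le_rfl)
    measurableSet_Ioo fun s hs ↦ ?_
  exact mul_le_mul_of_nonneg_right (pow_le_pow_of_le_one hs.1.le hs.2.le hMN)
    (hw.nonneg_of_mem_Ioo le_rfl hs)

lemma pow_mul_hatw_le_natMoment (hw : IsRadialWeight w) (N : ℕ) {u : ℝ} (hu : 0 ≤ u) :
    u ^ N * hatw w u ≤ natMoment w N := by
  calc u ^ N * hatw w u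
      ≤ ∫ s in Ioo u 1, s ^ N * w s := by
        rw [hatw, ← integral_const_mul]
        refine setIntegral_mono_on ((hw.integrableOn_Ioo hu).const_mul _)
          (hw.integrableOn_pow_mul N hu) measurableSet_Ioo fun s hs ↦ ?_
        exact mul_le_mul_of_nonneg_right (pow_le_pow_left₀ hu hs.1.le N)
          (hw.nonneg_of_mem_Ioo hu hs)
    _ ≤ natMoment w N := by
        refine setIntegral_mono_set (hw.integrableOn_pow_mul N le_rfl) ?_
          (Ioo_subset_Ioo_left hu).eventuallyLE
        filter_upwards [ae_restrict_mem measurableSet_Ioo] with s hs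
        exact mul_nonneg (pow_nonneg hs.1.le N) (hw.nonneg_of_mem_Ioo le_rfl hs)

lemma natMoment_pos (hw : IsRadialWeight w) (N : ℕ) : 0 < natMoment w N :=
  (mul_pos (pow_pos one_half_pos N) (hw.2.2 (1 / 2) (by norm_num))).trans_le
    (hw.pow_mul_hatw_le_natMoment N one_half_pos.le)

lemma moment_pos (hw : IsRadialWeight w) (n : ℕ) : 0 < moment w n :=
  hw.natMoment_pos (2 * n + 1)

lemma natMoment_add_le (hw : IsRadialWeight w) (N M : ℕ) {a : ℝ} (ha : 0 ≤ a) :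
    natMoment w (N + M) ≤ a ^ M * natMoment w N + hatw w a := by
  have hN := (hw.integrableOn_pow_mul N le_rfl).const_mul (a ^ M)
  have hwa : IntegrableOn ((Ioi a).indicator w) (Ioo 0 1) :=
    (hw.integrableOn_Ioo le_rfl).indicator measurableSet_Ioi
  have htail : hatw w a = ∫ s in Ioo 0 1, (Ioi a).indicator w s := by
    rw [setIntegral_indicator measurableSet_Ioi, Ioo_inter_Ioi, max_eq_right ha, hatw]
  rw [htail, natMoment, natMoment, ← integral_const_mul, ← integral_add hN hwa]
  refine setIntegral_mono_on (hw.integrableOn_pow_mul _ le_rfl) (hN.add hwa) measurableSet_Ioo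
    fun s hs ↦ ?_
  have hws := hw.nonneg_of_mem_Ioo le_rfl hs
  have hsN : 0 ≤ s ^ N * w s := mul_nonneg (pow_nonneg hs.1.le N) hws
  rcases le_or_gt s a with hsa | hsa
  · rw [indicator_of_notMem (notMem_Ioi.2 hsa), add_zero, pow_add, mul_comm (s ^ N), mul_assoc]
    exact mul_le_mul_of_nonneg_right (pow_le_pow_left₀ hs.1.le hsa M) hsN
  · rw [indicator_of_mem (mem_Ioi.2 hsa)]
    calc s ^ (N + M) * w s ≤ w s := mul_le_of_le_one_left hws (pow_le_one₀ hs.1.le hs.2.le)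
      _ ≤ _ := le_add_of_nonneg_left (mul_nonneg (pow_nonneg ha M) hsN)

end IsRadialWeight

lemma one_sub_half_pow_mem_Ico (m : ℕ) : 1 - (1 / 2 : ℝ) ^ m ∈ Ico (0 : ℝ) 1 :=
  ⟨sub_nonneg.2 (pow_le_one₀ one_half_pos.le one_half_lt_one.le),
    sub_lt_self 1 (pow_pos one_half_pos m)⟩

lemma one_sub_half_pow_sub_pow_two_pow_le_exp (m L : ℕ) :
    (1 - (1 / 2 : ℝ) ^ (m - L)) ^ 2 ^ m ≤ Real.exp (-2 ^ L) := by
  rcases lt_or_ge m L with hmL | hLm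
  · simpa [Nat.sub_eq_zero_of_le hmL.le] using (Real.exp_pos _).le
  · calc (1 - (1 / 2 : ℝ) ^ (m - L)) ^ 2 ^ m
        ≤ Real.exp (-(1 / 2) ^ (m - L)) ^ 2 ^ m :=
          pow_le_pow_left₀ (one_sub_half_pow_mem_Ico _).1 (Real.one_sub_le_exp_neg _) _
      _ = Real.exp (-2 ^ L) := by
          obtain ⟨k, rfl⟩ := Nat.exists_eq_add_of_le hLm
          rw [← Real.exp_nat_mul, Nat.add_sub_cancel_left]
          congr 1
          push_cast
          rw [pow_add, mul_neg, mul_assoc, ← mul_pow]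
          norm_num

lemma exp_neg_one_le_one_sub_inv_pow (N : ℕ) :
    Real.exp (-1) ≤ (1 - ((N + 1 : ℕ) : ℝ)⁻¹) ^ N := by
  rcases N.eq_zero_or_pos with rfl | hN
  · simp
  have hN0 : (N : ℝ) ≠ 0 := by positivity
  have hbase : 1 - ((N + 1 : ℕ) : ℝ)⁻¹ = (1 + (N : ℝ)⁻¹)⁻¹ := by
    push_cast
    field_simp
    ring
  rw [hbase, inv_pow, Real.exp_neg]
  exact inv_anti₀ (by positivity) Real.one_add_inv_pow_le_exp

namespace IsRadialWeight

variable {w : ℝ → ℝ} {C : ℝ}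

lemma one_le_of_hatw_le (hw : IsRadialWeight w)
    (hC : ∀ r ∈ Ico (0 : ℝ) 1, hatw w r ≤ C * hatw w ((1 + r) / 2)) : 1 ≤ C := by
  have hmem : (1 + 0) / 2 ∈ Ico (0 : ℝ) 1 := by norm_num
  refine le_of_mul_le_mul_right ?_ (hw.2.2 _ hmem)
  rw [one_mul]
  exact (hw.hatw_antitoneOn (by simp) hmem hmem.1).trans (hC 0 (by simp))

lemma hatw_one_sub_half_pow_le (hw : IsRadialWeight w)
    (hC : ∀ r ∈ Ico (0 : ℝ) 1, hatw w r ≤ C * hatw w ((1 + r) / 2)) (k i : ℕ) :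
    hatw w (1 - (1 / 2) ^ k) ≤ C ^ i * hatw w (1 - (1 / 2) ^ (k + i)) := by
  have hC0 : 0 ≤ C := zero_le_one.trans (hw.one_le_of_hatw_le hC)
  induction i with
  | zero => simp
  | succ i ih =>
    have hmid : (1 + (1 - (1 / 2 : ℝ) ^ (k + i))) / 2 = 1 - (1 / 2) ^ (k + (i + 1)) := by ring
    have hstep := hC _ (one_sub_half_pow_mem_Ico (k + i))
    rw [hmid] at hstep
    rw [pow_succ, mul_assoc]
    exact ih.trans (mul_le_mul_of_nonneg_left hstep (pow_nonneg hC0 i))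

lemma hatw_one_sub_half_pow_sub_le (hw : IsRadialWeight w)
    (hC : ∀ r ∈ Ico (0 : ℝ) 1, hatw w r ≤ C * hatw w ((1 + r) / 2)) (m L : ℕ) :
    hatw w (1 - (1 / 2) ^ (m - L)) ≤ C ^ L * hatw w (1 - (1 / 2) ^ m) := by
  calc hatw w (1 - (1 / 2) ^ (m - L))
      ≤ C ^ (m - (m - L)) * hatw w (1 - (1 / 2) ^ (m - L + (m - (m - L)))) :=
        hw.hatw_one_sub_half_pow_le hC _ _
    _ ≤ C ^ L * hatw w (1 - (1 / 2) ^ m) := by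
        rw [Nat.add_sub_cancel' (Nat.sub_le m L)]
        exact mul_le_mul_of_nonneg_right
          (pow_le_pow_right₀ (hw.one_le_of_hatw_le hC) (by lia))
          (hw.2.2 _ (one_sub_half_pow_mem_Ico m)).le

/-- Splitting the integral at `1 - 2 ^ (L - m)` bounds `ω_{2 ^ (m + 1)}` by a small multiple of
`ω_{2 ^ m}`, which is absorbed by the doubling of `ω̂`, plus a tail of the right size. -/
lemma exists_natMoment_two_pow_le (hw : IsRadialWeight w)
    (hC : ∀ r ∈ Ico (0 : ℝ) 1, hatw w r ≤ C * hatw w ((1 + r) / 2)) :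
    ∃ K > 0, ∀ m : ℕ, natMoment w (2 ^ m) ≤ K * hatw w (1 - (1 / 2) ^ m) := by
  have hC1 := hw.one_le_of_hatw_le hC
  obtain ⟨L, hL⟩ : ∃ L : ℕ, Real.exp (-2 ^ L) * C ≤ 1 / 2 := by
    obtain ⟨L, hL⟩ := pow_unbounded_of_one_lt (2 * C) one_lt_two
    refine ⟨L, ?_⟩
    rw [Real.exp_neg, inv_mul_le_iff₀ (Real.exp_pos _)]
    linarith [Real.add_one_le_exp ((2 : ℝ) ^ L)]
  refine ⟨2 * C ^ (L + 1), by positivity, fun m ↦ ?_⟩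
  induction m with
  | zero =>
    calc natMoment w (2 ^ 0) ≤ natMoment w 0 := hw.natMoment_antitone (Nat.zero_le _)
      _ = hatw w (1 - (1 / 2) ^ 0) := by simp [natMoment, hatw]
      _ ≤ 2 * C ^ (L + 1) * hatw w (1 - (1 / 2) ^ 0) :=
        le_mul_of_one_le_left (hw.2.2 _ (one_sub_half_pow_mem_Ico 0)).le
          (by linarith [one_le_pow₀ hC1 (n := L + 1)])
  | succ m ih =>
    set H := hatw w (1 - (1 / 2) ^ (m + 1))
    have hH : 0 ≤ H := (hw.2.2 _ (one_sub_half_pow_mem_Ico _)).le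
    have hm : hatw w (1 - (1 / 2) ^ m) ≤ C * H := by
      simpa only [pow_one] using hw.hatw_one_sub_half_pow_le hC m 1
    have htail : hatw w (1 - (1 / 2) ^ (m - L)) ≤ C ^ (L + 1) * H := by
      simpa only [Nat.add_sub_add_right] using
        hw.hatw_one_sub_half_pow_sub_le hC (m + 1) (L + 1)
    calc natMoment w (2 ^ (m + 1))
        ≤ (1 - (1 / 2) ^ (m - L)) ^ 2 ^ m * natMoment w (2 ^ m) +
            hatw w (1 - (1 / 2) ^ (m - L)) := by
          rw [pow_succ, mul_two]
          exact hw.natMoment_add_le _ _ (one_sub_half_pow_mem_Ico _).1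
      _ ≤ Real.exp (-2 ^ L) * (2 * C ^ (L + 1) * (C * H)) + C ^ (L + 1) * H := by
          gcongr
          · exact (hw.natMoment_pos _).le
          · exact one_sub_half_pow_sub_pow_two_pow_le_exp m L
          · exact ih.trans (by gcongr)
      _ = Real.exp (-2 ^ L) * C * (2 * C ^ (L + 1) * H) + C ^ (L + 1) * H := by ring
      _ ≤ 1 / 2 * (2 * C ^ (L + 1) * H) + C ^ (L + 1) * H := by gcongr
      _ = 2 * C ^ (L + 1) * H := by ring

lemma hatw_le_mul_hat1 (hw : IsRadialWeight w)
    (hC : ∀ r ∈ Ico (0 : ℝ) 1, hatw w r ≤ C * hatw w ((1 + r) / 2)) {r : ℝ}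
    (hr : r ∈ Ico (0 : ℝ) 1) : hatw w r ≤ 2 * C * hat1 w r := by
  have hC0 : 0 ≤ C := zero_le_one.trans (hw.one_le_of_hatw_le hC)
  have hmid : (1 + r) / 2 ∈ Ico (0 : ℝ) 1 := ⟨by linarith [hr.1], by linarith [hr.2]⟩
  have hhalf : hatw w ((1 + r) / 2) ≤ 2 * hat1 w ((1 + r) / 2) := by
    nlinarith [hw.mul_hatw_le_hat1 hmid.1, hw.2.2 _ hmid, hr.1]
  calc hatw w r ≤ C * hatw w ((1 + r) / 2) := hC r hr
    _ ≤ C * (2 * hat1 w r) := by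
      gcongr
      exact hhalf.trans (by gcongr; exact hw.hat1_antitoneOn hr hmid (by linarith [hr.2]))
    _ = 2 * C * hat1 w r := by ring

lemma exists_moment_le_mul_hat1 (hw : IsRadialWeight w) (hD : Dhat w) :
    ∃ K > 0, ∀ r ∈ Ico (0 : ℝ) 1, ∃ n : ℕ,
      (∀ s ∈ Ioi r, Real.exp (-1) ≤ s ^ n) ∧ moment w n ≤ K * hat1 w r := by
  obtain ⟨C, hC⟩ := hD
  have hC1 := hw.one_le_of_hatw_le hC
  obtain ⟨K, hK, hKm⟩ := hw.exists_natMoment_two_pow_le hC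
  refine ⟨K * (C * (2 * C)), by positivity, fun r hr ↦ ?_⟩
  -- `n = 2 ^ m - 1` has the size of `1 / (1 - r)`
  obtain ⟨m, hrm, hmr⟩ := exists_nat_pow_near_of_lt_one (sub_pos.2 hr.2)
    (sub_le_self 1 hr.1) one_half_pos one_half_lt_one
  have hm1 : 1 ≤ 2 ^ m := Nat.one_le_two_pow
  refine ⟨2 ^ m - 1, fun s hs ↦ ?_, ?_⟩
  · calc Real.exp (-1) ≤ (1 - (1 / 2) ^ m) ^ (2 ^ m - 1) := by
          simpa [Nat.sub_add_cancel hm1] using exp_neg_one_le_one_sub_inv_pow (2 ^ m - 1)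
      _ ≤ s ^ (2 ^ m - 1) :=
          pow_le_pow_left₀ (one_sub_half_pow_mem_Ico m).1 (by linarith [mem_Ioi.1 hs]) _
  · calc moment w (2 ^ m - 1) ≤ natMoment w (2 ^ m) := hw.natMoment_antitone (by lia)
      _ ≤ K * hatw w (1 - (1 / 2) ^ m) := hKm m
      _ ≤ K * (C * hatw w (1 - (1 / 2) ^ (m + 1))) := by
          gcongr
          simpa using hw.hatw_one_sub_half_pow_le hC m 1
      _ ≤ K * (C * (2 * C * hat1 w r)) := by
          gcongr
          exact (hw.hatw_antitoneOn hr (one_sub_half_pow_mem_Ico _) (by linarith)).trans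
            (hw.hatw_le_mul_hat1 hC hr)
      _ = K * (C * (2 * C)) * hat1 w r := by ring

end IsRadialWeight

end RadialWeight

section TestFunctions

variable {p : ℝ} {w v : ℝ → ℝ}

lemma lintegral_ball_comp_norm_div_pi {G : ℝ → ℝ≥0∞} (hG : AEMeasurable G radialMeasure) :
    (∫⁻ z in ball (0 : ℂ) 1, G ‖z‖) / ENNReal.ofReal Real.pi = 2 * ∫⁻ s, G s ∂radialMeasure := by
  have hpi : ENNReal.ofReal Real.pi ≠ 0 := by simpa using Real.pi_pos
  rw [lintegral_ball_comp_norm hG, ENNReal.ofReal_mul two_pos.le, ENNReal.ofReal_ofNat,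
    mul_right_comm, ENNReal.mul_div_cancel_right hpi ENNReal.ofReal_ne_top]

lemma LpC_eq_lintegral_enorm (hp : 0 ≤ p) (v : ℝ → ℝ) (f : ℂ → ℂ) :
    LpC p v f = ((∫⁻ z in ball (0 : ℂ) 1, ‖f z‖ₑ ^ p * ENNReal.ofReal (v ‖z‖)) /
      ENNReal.ofReal Real.pi) ^ (1 / p) := by
  simp only [LpC, ENNReal.ofReal_mul (Real.rpow_nonneg (norm_nonneg _) p),
    ← ENNReal.ofReal_rpow_of_nonneg (norm_nonneg _) hp, ofReal_norm]

lemma LpC_le_of_enorm_le (hp : 0 ≤ p) (hv : AEMeasurable v radialMeasure) {f : ℂ → ℂ}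
    {g : ℝ → ℝ≥0∞} (hg : Measurable g) (hfg : ∀ z ∈ ball (0 : ℂ) 1, ‖f z‖ₑ ≤ g ‖z‖) :
    LpC p v f ≤ (2 * ∫⁻ s, g s ^ p * ENNReal.ofReal (v s) ∂radialMeasure) ^ (1 / p) := by
  rw [LpC_eq_lintegral_enorm hp, ← lintegral_ball_comp_norm_div_pi (by fun_prop)]
  gcongr ?_ ^ _
  gcongr ?_ / _
  refine setLIntegral_mono' measurableSet_ball fun z hz ↦ ?_
  gcongr
  exact hfg z hz

lemma mul_rpow_le_LpC_of_le_enorm (hp : 0 < p) (hv : AEMeasurable v radialMeasure) {f : ℂ → ℂ}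
    {c : ℝ≥0∞} {r : ℝ} (hcf : ∀ z ∈ ball (0 : ℂ) 1, r < ‖z‖ → c ≤ ‖f z‖ₑ) :
    c * (2 * ∫⁻ s in Ioi r, ENNReal.ofReal (v s) ∂radialMeasure) ^ (1 / p) ≤ LpC p v f := by
  have hvm : AEMeasurable (fun s ↦ c ^ p * ENNReal.ofReal (v s)) radialMeasure := by fun_prop
  calc c * (2 * ∫⁻ s in Ioi r, ENNReal.ofReal (v s) ∂radialMeasure) ^ (1 / p)
      = (2 * ∫⁻ s in Ioi r, c ^ p * ENNReal.ofReal (v s) ∂radialMeasure) ^ (1 / p) := by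
        rw [lintegral_const_mul'' _ (by fun_prop), mul_left_comm,
          ENNReal.mul_rpow_of_nonneg (c ^ p) _ (by positivity), ← ENNReal.rpow_mul,
          mul_one_div_cancel hp.ne', ENNReal.rpow_one]
    _ ≤ LpC p v f := by
        rw [← lintegral_indicator measurableSet_Ioi, ← lintegral_ball_comp_norm_div_pi
          (hvm.indicator measurableSet_Ioi), LpC_eq_lintegral_enorm hp.le]
        gcongr ?_ ^ _
        gcongr ?_ / _
        refine setLIntegral_mono' measurableSet_ball fun z hz ↦ ?_
        refine indicator_apply_le' (fun hrz ↦ ?_) fun _ ↦ zero_le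
        gcongr
        exact hcf z hz hrz

lemma summable_pow_div_two_mul_moment (hw : IsRadialWeight w) {t : ℝ} (ht : t ∈ Ico (0 : ℝ) 1) :
    Summable fun k ↦ t ^ k / (2 * moment w k) := by
  obtain ⟨u, hu, htu⟩ : ∃ u ∈ Ioo (0 : ℝ) 1, t < u ^ 2 :=
    ⟨(1 + t) / 2, ⟨by linarith [ht.1], by linarith [ht.2]⟩,
      by nlinarith [sq_pos_of_pos (sub_pos.2 ht.2)]⟩
  have hu0 := hu.1
  have hH := hw.2.2 u ⟨hu.1.le, hu.2⟩
  have hratio : t / u ^ 2 < 1 := (div_lt_one (by positivity)).2 htu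
  refine .of_nonneg_of_le (fun k ↦ ?_) (fun k ↦ ?_) ((summable_geometric_of_lt_one
    (div_nonneg ht.1 (sq_nonneg u)) hratio).mul_right (1 / (2 * (u * hatw w u))))
  · exact div_nonneg (pow_nonneg ht.1 k) (by linarith [hw.moment_pos k])
  · calc t ^ k / (2 * moment w k) ≤ t ^ k / (2 * (u ^ (2 * k + 1) * hatw w u)) := by
          gcongr
          · exact pow_nonneg ht.1 k
          · exact hw.pow_mul_hatw_le_natMoment (2 * k + 1) hu0.le
      _ = (t / u ^ 2) ^ k * (1 / (2 * (u * hatw w u))) := by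
          rw [div_pow, ← pow_mul, pow_succ]
          field_simp

lemma Pw_eq_tsum (hw : IsRadialWeight w) {f : ℂ → ℂ}
    (hf : IntegrableOn (fun ζ ↦ f ζ * (w ‖ζ‖ : ℂ)) (ball 0 1)) {z : ℂ} (hz : z ∈ ball (0 : ℂ) 1) :
    Pw w f z = (∑' k, z ^ k / (2 * moment w k : ℝ) *
      ∫ ζ in ball (0 : ℂ) 1, starRingEnd ℂ ζ ^ k * (f ζ * (w ‖ζ‖ : ℂ))) / Real.pi := by
  have hint (k : ℕ) :
      IntegrableOn (fun ζ ↦ starRingEnd ℂ ζ ^ k * (f ζ * (w ‖ζ‖ : ℂ))) (ball 0 1) := by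
    refine Integrable.bdd_mul (c := 1) hf (by fun_prop) ?_
    filter_upwards [ae_restrict_mem measurableSet_ball] with ζ hζ
    rw [norm_pow, RCLike.norm_conj]
    exact pow_le_one₀ (norm_nonneg ζ) (mem_ball_zero_iff.1 hζ).le
  have hsum : Summable fun k ↦ ∫ ζ in ball (0 : ℂ) 1,
      ‖z ^ k / (2 * moment w k : ℝ) * (starRingEnd ℂ ζ ^ k * (f ζ * (w ‖ζ‖ : ℂ)))‖ := by
    refine .of_nonneg_of_le (fun k ↦ by positivity) (fun k ↦ ?_)
      ((summable_pow_div_two_mul_moment hw ⟨norm_nonneg z, mem_ball_zero_iff.1 hz⟩).mul_right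
        (∫ ζ in ball (0 : ℂ) 1, ‖f ζ * (w ‖ζ‖ : ℂ)‖))
    have hm := hw.moment_pos k
    simp_rw [norm_mul (z ^ k / _), integral_const_mul, norm_div, norm_pow, Complex.norm_real,
      Real.norm_of_nonneg (mul_nonneg two_pos.le hm.le)]
    refine mul_le_mul_of_nonneg_left (setIntegral_mono_on (hint k).norm hf.norm measurableSet_ball
      fun ζ hζ ↦ ?_) (by positivity)
    rw [norm_mul, norm_pow, RCLike.norm_conj]
    exact mul_le_of_le_one_left (norm_nonneg _)
      (pow_le_one₀ (norm_nonneg ζ) (mem_ball_zero_iff.1 hζ).le)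
  rw [Pw]
  simp_rw [← integral_const_mul]
  rw [integral_tsum_of_summable_integral_norm (fun k ↦ (hint k).const_mul _) hsum]
  congr 2 with ζ
  rw [Bker, Complex.conj_tsum, mul_right_comm, ← tsum_mul_left]
  congr 1 with k
  simp only [map_div₀, map_pow, map_mul, Complex.conj_conj, Complex.conj_ofReal, mul_pow]
  ring

/-- The test function `ζ ^ n * h |ζ|` with radial profile `h`, on which `P_ω` acts diagonally. -/
def radialMonomial (n : ℕ) (h : ℝ → ℝ≥0) (ζ : ℂ) : ℂ := ζ ^ n * (h ‖ζ‖ : ℝ)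

lemma enorm_radialMonomial (n : ℕ) (h : ℝ → ℝ≥0) (ζ : ℂ) :
    ‖radialMonomial n h ζ‖ₑ = ‖ζ‖ₑ ^ n * h ‖ζ‖ := by
  have hh : ‖((h ‖ζ‖ : ℝ) : ℂ)‖ₑ = h ‖ζ‖ := by
    rw [← ofReal_norm, Complex.norm_real, Real.norm_of_nonneg (NNReal.coe_nonneg _),
      ENNReal.ofReal_coe_nnreal]
  rw [radialMonomial, enorm_mul, enorm_pow, hh]

lemma measurable_radialMonomial (n : ℕ) {h : ℝ → ℝ≥0} (hh : Measurable h) :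
    Measurable (radialMonomial n h) := by
  unfold radialMonomial
  fun_prop

lemma integrableOn_radialMonomial_mul {n : ℕ} {h : ℝ → ℝ≥0}
    (hh : Integrable (fun s ↦ (h s : ℝ) * w s) radialMeasure) :
    IntegrableOn (fun ζ ↦ radialMonomial n h ζ * (w ‖ζ‖ : ℂ)) (ball 0 1) := by
  have hrad : IntegrableOn (fun ζ : ℂ ↦ (((h ‖ζ‖ : ℝ) * w ‖ζ‖ : ℝ) : ℂ)) (ball 0 1) :=
    (integrableOn_ball_comp_norm hh).ofReal
  refine (Integrable.bdd_mul (c := 1) (f := fun ζ : ℂ ↦ ζ ^ n) hrad (by fun_prop) ?_).congr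
    (.of_forall fun ζ ↦ ?_)
  · filter_upwards [ae_restrict_mem measurableSet_ball] with ζ hζ
    rw [norm_pow]
    exact pow_le_one₀ (norm_nonneg ζ) (mem_ball_zero_iff.1 hζ).le
  · simp only [radialMonomial, Complex.ofReal_mul, mul_assoc]

lemma Pw_radialMonomial (hw : IsRadialWeight w) (n : ℕ) {h : ℝ → ℝ≥0}
    (hh : Integrable (fun s ↦ (h s : ℝ) * w s) radialMeasure) {z : ℂ} (hz : z ∈ ball (0 : ℂ) 1) :
    Pw w (radialMonomial n h) z =
      z ^ n * ((∫ s, s ^ (2 * n) * (h s * w s) ∂radialMeasure) / moment w n : ℝ) := by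
  have hoff (k : ℕ) (hk : k ≠ n) : ∫ ζ in ball (0 : ℂ) 1,
      starRingEnd ℂ ζ ^ k * (radialMonomial n h ζ * (w ‖ζ‖ : ℂ)) = 0 := by
    refine (setIntegral_congr_fun measurableSet_ball fun ζ _ ↦ ?_).trans
      (setIntegral_ball_pow_mul_conj_pow_mul_radial_eq_zero hk.symm (fun s ↦ (h s : ℝ) * w s) 1)
    simp only [radialMonomial]
    ring
  have hdiag : ∫ ζ in ball (0 : ℂ) 1, starRingEnd ℂ ζ ^ n * (radialMonomial n h ζ * (w ‖ζ‖ : ℂ)) =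
      (2 * Real.pi * ∫ s, s ^ (2 * n) * (h s * w s) ∂radialMeasure : ℝ) := by
    have hmeas : AEStronglyMeasurable (fun s ↦ s ^ (2 * n) * (h s * w s)) radialMeasure :=
      (continuous_pow _).aestronglyMeasurable.mul hh.1
    rw [← integral_ball_comp_norm hmeas, ← integral_complex_ofReal]
    congr 1 with ζ
    have hζ : (‖ζ‖ : ℂ) ^ (2 * n) = starRingEnd ℂ ζ ^ n * ζ ^ n := by
      rw [pow_mul, ← Complex.conj_mul', mul_pow]
    simp only [radialMonomial, Complex.ofReal_mul, Complex.ofReal_pow, hζ]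
    ring
  have hm : (moment w n : ℂ) ≠ 0 := by exact_mod_cast (hw.moment_pos n).ne'
  have hpi : (Real.pi : ℂ) ≠ 0 := by exact_mod_cast Real.pi_ne_zero
  rw [Pw_eq_tsum hw (integrableOn_radialMonomial_mul hh) hz,
    tsum_eq_single n fun k hk ↦ by rw [hoff k hk, mul_zero], hdiag]
  push_cast
  field_simp

lemma enorm_Pw_radialMonomial (hw : IsRadialWeight w) (n : ℕ) {h : ℝ → ℝ≥0}
    (hh : Integrable (fun s ↦ (h s : ℝ) * w s) radialMeasure) {z : ℂ} (hz : z ∈ ball (0 : ℂ) 1) :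
    ‖Pw w (radialMonomial n h) z‖ₑ = ‖z‖ₑ ^ n *
      ((∫⁻ s, ENNReal.ofReal s ^ (2 * n) * (h s * ENNReal.ofReal (w s)) ∂radialMeasure) /
        ENNReal.ofReal (moment w n)) := by
  have hnonneg : ∀ᵐ s ∂radialMeasure, 0 ≤ s ^ (2 * n) * (h s * w s) := by
    filter_upwards [ae_radialMeasure_mem_Ioo] with s hs
    exact mul_nonneg (pow_nonneg hs.1.le _)
      (mul_nonneg (NNReal.coe_nonneg _) (hw.nonneg_of_mem_Ioo le_rfl hs))
  have hint : Integrable (fun s ↦ s ^ (2 * n) * (h s * w s)) radialMeasure := by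
    refine Integrable.bdd_mul (c := 1) hh (continuous_pow _).aestronglyMeasurable ?_
    filter_upwards [ae_radialMeasure_mem_Ioo] with s hs
    rw [norm_pow, Real.norm_of_nonneg hs.1.le]
    exact pow_le_one₀ hs.1.le hs.2.le
  have hcoeff : ∫⁻ s, ENNReal.ofReal (s ^ (2 * n) * (h s * w s)) ∂radialMeasure =
      ∫⁻ s, ENNReal.ofReal s ^ (2 * n) * (h s * ENNReal.ofReal (w s)) ∂radialMeasure := by
    refine lintegral_congr_ae ?_
    filter_upwards [ae_radialMeasure_mem_Ioo] with s hs
    rw [ENNReal.ofReal_mul (pow_nonneg hs.1.le _), ENNReal.ofReal_pow hs.1.le,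
      ENNReal.ofReal_mul (NNReal.coe_nonneg _), ENNReal.ofReal_coe_nnreal]
  rw [Pw_radialMonomial hw n hh hz, enorm_mul, enorm_pow, ← ofReal_norm (Complex.ofReal _),
    Complex.norm_real, Real.norm_of_nonneg (div_nonneg (integral_nonneg_of_ae hnonneg)
      (hw.moment_pos n).le), ENNReal.ofReal_div_of_pos (hw.moment_pos n),
    ofReal_integral_eq_lintegral_ofReal hint hnonneg, hcoeff]

lemma LpC_radialMonomial_indicator_le (hp : 0 < p) (hv : AEMeasurable v radialMeasure) (n : ℕ)
    {h : ℝ → ℝ≥0} (hh : Measurable h) (r : ℝ) :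
    LpC p v (radialMonomial n ((Ioi r).indicator h)) ≤
      (2 * ∫⁻ s in Ioi r, (h s : ℝ≥0∞) ^ p * ENNReal.ofReal (v s) ∂radialMeasure) ^ (1 / p) := by
  have hind : (Ioi r).indicator (fun s ↦ (h s : ℝ≥0∞) ^ p * ENNReal.ofReal (v s)) =
      fun s ↦ (((Ioi r).indicator h s : ℝ≥0) : ℝ≥0∞) ^ p * ENNReal.ofReal (v s) := by
    ext s
    by_cases hs : s ∈ Ioi r <;> simp [hs, hp]
  rw [← lintegral_indicator measurableSet_Ioi, hind]
  refine LpC_le_of_enorm_le hp.le hv (hh.indicator measurableSet_Ioi).coe_nnreal_ennreal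
    fun z hz ↦ ?_
  rw [enorm_radialMonomial]
  refine mul_le_of_le_one_left zero_le (pow_le_one₀ zero_le ?_)
  rw [← ofReal_norm, ENNReal.ofReal_le_one]
  exact (mem_ball_zero_iff.1 hz).le

lemma le_enorm_Pw_radialMonomial_indicator (hw : IsRadialWeight w) {n : ℕ} {h : ℝ → ℝ≥0}
    (hh : Measurable h) {M : ℝ≥0} (hM : ∀ s, h s ≤ M) {r : ℝ} {δ : ℝ≥0∞}
    (hδ : ∀ s ∈ Ioi r, δ ≤ ENNReal.ofReal s ^ n) {z : ℂ} (hz : z ∈ ball (0 : ℂ) 1)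
    (hrz : r < ‖z‖) :
    δ * (δ ^ 2 * (∫⁻ s in Ioi r, h s * ENNReal.ofReal (w s) ∂radialMeasure) /
      ENNReal.ofReal (moment w n)) ≤ ‖Pw w (radialMonomial n ((Ioi r).indicator h)) z‖ₑ := by
  have hwr := hw.integrable_radialMeasure
  have hint : Integrable (fun s ↦ (((Ioi r).indicator h s : ℝ≥0) : ℝ) * w s) radialMeasure := by
    refine Integrable.bdd_mul (c := M) hwr
      (hh.indicator measurableSet_Ioi).coe_nnreal_real.aestronglyMeasurable (.of_forall fun s ↦ ?_)
    rw [Real.norm_of_nonneg (NNReal.coe_nonneg _)]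
    exact NNReal.coe_le_coe.2 ((indicator_le_self _ _ s).trans (hM s))
  rw [enorm_Pw_radialMonomial hw n hint hz]
  gcongr ?_ * (?_ / _)
  · rw [← ofReal_norm]
    exact hδ _ hrz
  · have hwm : AEMeasurable w radialMeasure := hwr.aemeasurable
    rw [← lintegral_const_mul'' _ (by fun_prop), ← lintegral_indicator measurableSet_Ioi]
    refine lintegral_mono fun s ↦ indicator_apply_le' (fun hs ↦ ?_) fun _ ↦ zero_le
    rw [indicator_of_mem hs, mul_comm 2, pow_mul]
    gcongr
    exact hδ s hs

lemma setLIntegral_rpow_mul_ofReal_ne_top (hp : 0 ≤ p) (hv : IsRadialWeight v) {h : ℝ → ℝ≥0}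
    {M : ℝ≥0} (hM : ∀ s, h s ≤ M) (r : ℝ) :
    ∫⁻ s in Ioi r, (h s : ℝ≥0∞) ^ p * ENNReal.ofReal (v s) ∂radialMeasure ≠ ⊤ := by
  refine ne_top_of_le_ne_top (ENNReal.mul_ne_top (ENNReal.rpow_ne_top_of_nonneg hp
    ENNReal.coe_ne_top) hv.integrable_radialMeasure.restrict.lintegral_lt_top.ne) (b :=
      (M : ℝ≥0∞) ^ p * ∫⁻ s in Ioi r, ENNReal.ofReal (v s) ∂radialMeasure) ?_
  rw [← lintegral_const_mul' _ _ (ENNReal.rpow_ne_top_of_nonneg hp ENNReal.coe_ne_top)]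
  gcongr with s
  exact hM s

lemma lintegral_mul_rpow_le_of_Pw_bound (hp : 0 < p) (hw : IsRadialWeight w)
    (hv : IsRadialWeight v) {C : ℝ≥0∞}
    (hC : ∀ f : ℂ → ℂ, Measurable f → LpC p v f < ⊤ → LpC p v (Pw w f) ≤ C * LpC p v f)
    {r : ℝ} {n : ℕ} {δ : ℝ≥0∞} (hδ : ∀ s ∈ Ioi r, δ ≤ ENNReal.ofReal s ^ n) {h : ℝ → ℝ≥0}
    (hh : Measurable h) (hhM : ∃ M, ∀ s, h s ≤ M) :
    δ ^ 3 * (∫⁻ s in Ioi r, ENNReal.ofReal (v s) ∂radialMeasure) ^ (1 / p) *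
        ∫⁻ s in Ioi r, h s * ENNReal.ofReal (w s) ∂radialMeasure ≤
      C * ENNReal.ofReal (moment w n) *
        (∫⁻ s in Ioi r, (h s : ℝ≥0∞) ^ p * ENNReal.ofReal (v s) ∂radialMeasure) ^ (1 / p) := by
  obtain ⟨M, hM⟩ := hhM
  have hvm : AEMeasurable v radialMeasure := hv.integrable_radialMeasure.aemeasurable
  set V := ∫⁻ s in Ioi r, ENNReal.ofReal (v s) ∂radialMeasure
  set I := ∫⁻ s in Ioi r, h s * ENNReal.ofReal (w s) ∂radialMeasure
  set J := ∫⁻ s in Ioi r, (h s : ℝ≥0∞) ^ p * ENNReal.ofReal (v s) ∂radialMeasure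
  set f := radialMonomial n ((Ioi r).indicator h)
  set m := ENNReal.ofReal (moment w n)
  have hm0 : m ≠ 0 := by simpa [m] using hw.moment_pos n
  have hfJ : LpC p v f ≤ (2 * J) ^ (1 / p) := LpC_radialMonomial_indicator_le hp hvm n hh r
  have hJ : J ≠ ⊤ := setLIntegral_rpow_mul_ofReal_ne_top hp.le hv hM r
  have htest : δ * (δ ^ 2 * I / m) * (2 * V) ^ (1 / p) ≤ C * (2 * J) ^ (1 / p) :=
    calc δ * (δ ^ 2 * I / m) * (2 * V) ^ (1 / p) ≤ LpC p v (Pw w f) :=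
          mul_rpow_le_LpC_of_le_enorm hp hvm fun z hz hrz ↦
            le_enorm_Pw_radialMonomial_indicator hw hh hM hδ hz hrz
      _ ≤ C * LpC p v f := hC f (measurable_radialMonomial n (hh.indicator measurableSet_Ioi))
          (hfJ.trans_lt (by finiteness))
      _ ≤ C * (2 * J) ^ (1 / p) := by gcongr
  have htwo0 : (2 : ℝ≥0∞) ^ (1 / p) ≠ 0 := by simp
  have htwo : (2 : ℝ≥0∞) ^ (1 / p) ≠ ⊤ := by finiteness
  rw [ENNReal.mul_rpow_of_nonneg _ _ (by positivity),
    ENNReal.mul_rpow_of_nonneg _ _ (by positivity),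
    mul_left_comm, mul_left_comm C, ENNReal.mul_le_mul_iff_right htwo0 htwo] at htest
  calc δ ^ 3 * V ^ (1 / p) * I = δ * (δ ^ 2 * I) * V ^ (1 / p) := by ring
    _ = δ * (δ ^ 2 * I / m * m) * V ^ (1 / p) := by
        rw [ENNReal.div_mul_cancel hm0 ENNReal.ofReal_ne_top]
    _ = δ * (δ ^ 2 * I / m) * V ^ (1 / p) * m := by ring
    _ ≤ C * J ^ (1 / p) * m := by gcongr
    _ = C * m * J ^ (1 / p) := by ring

end TestFunctions

section MuckenhouptCondition

variable {p : ℝ} {w v : ℝ → ℝ}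

lemma rpow_mul_lintegral_sigmaE_rpow_le (hp : 1 < p) (hw : IsRadialWeight w)
    (hv : IsRadialWeight v) {C : ℝ≥0∞}
    (hC : ∀ f : ℂ → ℂ, Measurable f → LpC p v f < ⊤ → LpC p v (Pw w f) ≤ C * LpC p v f)
    {r : ℝ} {n : ℕ} {δ : ℝ≥0∞} (hδ : ∀ s ∈ Ioi r, δ ≤ ENNReal.ofReal s ^ n) (hδ0 : δ ≠ 0) :
    (∫⁻ s in Ioi r, ENNReal.ofReal (v s) ∂radialMeasure) ^ (1 / p) *
        (∫⁻ s in Ioi r, sigmaE p w v s ∂radialMeasure) ^ (1 - 1 / p) ≤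
      C * ENNReal.ofReal (moment w n) / δ ^ 3 := by
  have hp0 : 0 < p := zero_lt_one.trans hp
  have hδ_top : δ ≠ ⊤ := ne_top_of_le_ne_top (by finiteness) (hδ (r + 1) (lt_add_one r))
  set V := (∫⁻ s in Ioi r, ENNReal.ofReal (v s) ∂radialMeasure) ^ (1 / p)
  rcases eq_or_ne V 0 with hV0 | hV0
  · simp [hV0]
  have hV : V ≠ ⊤ := ENNReal.rpow_ne_top_of_nonneg (by positivity)
    hv.integrable_radialMeasure.restrict.lintegral_lt_top.ne
  have hσ : (∫⁻ s in Ioi r, sigmaE p w v s ∂radialMeasure) ^ (1 - 1 / p) ≤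
      C * ENNReal.ofReal (moment w n) / δ ^ 3 / V := by
    refine lintegral_div_rpow_rpow_le_of_forall_lintegral_mul_le hp
      hw.integrable_radialMeasure.aemeasurable.real_toNNReal.restrict
      hv.integrable_radialMeasure.aemeasurable.real_toNNReal.restrict fun h hh hhM ↦ ?_
    rw [← ENNReal.mul_div_right_comm, ← ENNReal.mul_div_right_comm,
      ENNReal.le_div_iff_mul_le (.inl hV0) (.inl hV),
      ENNReal.le_div_iff_mul_le (.inl (by simpa)) (.inl (by finiteness)), mul_comm, mul_comm _ V,
      ← mul_assoc]
    exact lintegral_mul_rpow_le_of_Pw_bound hp0 hw hv hC hδ hh hhM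
  exact (mul_le_mul_right hσ V).trans ENNReal.mul_div_le

lemma ApE_eq_iSup_radialMeasure (p : ℝ) (w v : ℝ → ℝ) :
    ApE p w v = ⨆ r ∈ Ico (0 : ℝ) 1,
      (∫⁻ s in Ioi r, ENNReal.ofReal (v s) ∂radialMeasure) ^ (1 / p) *
        (∫⁻ s in Ioi r, sigmaE p w v s ∂radialMeasure) ^ (1 - 1 / p) /
        ENNReal.ofReal (hat1 w r) := by
  refine biSup_congr fun r hr ↦ ?_
  rw [setLIntegral_radialMeasure_Ioi hr.1, setLIntegral_radialMeasure_Ioi hr.1]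
  congr 3
  exact setLIntegral_congr_fun measurableSet_Ioo fun s hs ↦
    ENNReal.ofReal_mul (hr.1.trans hs.1.le)

end MuckenhouptCondition

/-- Lemma B. Let `1 < p < ∞`, let `ω` be a radial weight in the class `D̂`,
and let `ν` be a radial weight. If the Bergman projection `P_ω` is bounded on `L^p_ν`,
then `A_p(ω,ν) < ∞`. -/
theorem necessity_of_Ap (p : ℝ) (hp : 1 < p) (w v : ℝ → ℝ)
    (hw : IsRadialWeight w) (hv : IsRadialWeight v) (hwD : Dhat w)
    (hP : PwBounded p w v) :
    ApE p w v < ⊤ := by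
  obtain ⟨C, -, hC⟩ := hP
  obtain ⟨K, hK0, hK⟩ := hw.exists_moment_le_mul_hat1 hwD
  set δ := ENNReal.ofReal (Real.exp (-1))
  have hδ0 : δ ≠ 0 := by simpa [δ] using Real.exp_pos (-1)
  suffices h : ApE p w v ≤ ENNReal.ofReal C * ENNReal.ofReal K / δ ^ 3 from
    h.trans_lt (by finiteness)
  rw [ApE_eq_iSup_radialMeasure]
  refine iSup₂_le fun r hr ↦ ENNReal.div_le_of_le_mul ?_
  obtain ⟨n, hn, hnK⟩ := hK r hr
  have hδ (s : ℝ) (hs : s ∈ Ioi r) : δ ≤ ENNReal.ofReal s ^ n := by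
    rw [← ENNReal.ofReal_pow (hr.1.trans_lt hs).le]
    exact ENNReal.ofReal_le_ofReal (hn s hs)
  have hm : ENNReal.ofReal (moment w n) ≤ ENNReal.ofReal K * ENNReal.ofReal (hat1 w r) := by
    rw [← ENNReal.ofReal_mul hK0.le]
    exact ENNReal.ofReal_le_ofReal hnK
  calc _ ≤ ENNReal.ofReal C * ENNReal.ofReal (moment w n) / δ ^ 3 :=
        rpow_mul_lintegral_sigmaE_rpow_le hp hw hv (fun f hf hfv ↦ (hC f hf hfv).2) hδ hδ0
    _ ≤ ENNReal.ofReal C * (ENNReal.ofReal K * ENNReal.ofReal (hat1 w r)) / δ ^ 3 := by gcongr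
    _ = _ := by rw [← mul_assoc, ENNReal.mul_div_right_comm]

end
end

section
/- Let 1 < p < ∞ and let ω and ν be radial weights. Suppose that for every f ∈ L^p_ν the integral ∫_𝔻 |f(ζ)| |B_z^ω(ζ)| ω(ζ) dA(ζ) is finite for almost every z ∈ 𝔻. Then L^p_ν ⊆ L¹_ω and there exists a constant C > 0 such that ‖f‖_{L¹_ω} ≤ C ‖f‖_{L^p_ν} for every f ∈ L^p_ν. -/
/-!
Since `B_0^ω` is the nonzero constant `1 / (2 ω₁)`, the kernel `B_z^ω(ζ)` is bounded below on `𝔻`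
for all `z` near `0`; testing the hypothesis at one such `z` gives `L^p_ν ⊆ L¹_ω`.

The norm inequality follows by a gliding hump: if it failed, a suitable `ℓ^p`-sum of functions of
norm at most one would lie in `L^p_ν` but not in `L¹_ω`. That sum is finite only `ν dA`-almost
everywhere, so one needs `ω dA ≪ ν dA`. Otherwise some `ν dA`-null set has positive `ω dA`-measure,
and the inclusion makes every finite function on it `ω dA`-integrable; but `ω dA` has no point
masses, so there are sets `tₙ` of arbitrarily small positive measure in it and `∑ 1_{tₙ} / |tₙ|` is
not integrable.
-/

open MeasureTheory Set Metric
open scoped ENNReal NNReal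

noncomputable section

/-- The `L¹_ω` norm of `f`. -/
def L1w (w : ℝ → ℝ) (f : ℂ → ℂ) : ℝ≥0∞ :=
  (∫⁻ z in Metric.ball (0:ℂ) 1, ENNReal.ofReal (‖f z‖ * w ‖z‖)) / ENNReal.ofReal Real.pi

section MeasureInclusion

variable {α : Type*} [MeasurableSpace α] {μ ν : Measure α} {p : ℝ}

theorem exists_isOpen_measure_pos_lt [TopologicalSpace α] [HereditarilyLindelofSpace α]
    [NullSingletonClass μ] [μ.OuterRegular] (hμ : μ ≠ 0) {ε : ℝ≥0∞} (hε : 0 < ε) :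
    ∃ U, IsOpen U ∧ 0 < μ U ∧ μ U < ε := by
  obtain ⟨x, hx⟩ := Measure.nonempty_support hμ
  obtain ⟨U, hxU, hU, hUε⟩ := Set.exists_isOpen_lt_of_lt {x} ε (by rwa [measure_singleton (μ := μ)])
  exact ⟨U, hU, Measure.mem_support_iff_forall x |>.1 hx U (hU.mem_nhds (hxU rfl)), hUε⟩

theorem exists_measurable_lintegral_eq_top [TopologicalSpace α] [HereditarilyLindelofSpace α]
    [OpensMeasurableSpace α] [NullSingletonClass μ] [μ.OuterRegular] (hμ : μ ≠ 0) :
    ∃ g : α → ℝ≥0, Measurable g ∧ ∫⁻ x, g x ∂μ = ⊤ := by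
  choose t ht_open ht_pos ht_lt using fun n : ℕ =>
    exists_isOpen_measure_pos_lt hμ (show 0 < (2 : ℝ≥0∞)⁻¹ ^ n by simp [pos_iff_ne_zero])
  have ht_top (n : ℕ) : μ (t n) ≠ ⊤ := ((ht_lt n).trans_le le_top).ne
  set G : α → ℝ≥0∞ := fun x => ∑' n, (t n).indicator (fun _ => (μ (t n))⁻¹) x
  have hG_meas : Measurable G :=
    .tsum fun n => measurable_const.indicator (ht_open n).measurableSet
  have hG_lintegral : ∫⁻ x, G x ∂μ = ⊤ := by
    rw [lintegral_tsum fun n =>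
      (measurable_const.indicator (ht_open n).measurableSet).aemeasurable]
    simp [lintegral_indicator_const (ht_open _).measurableSet,
      ENNReal.inv_mul_cancel (ht_pos _).ne' (ht_top _)]
  have hG_finite : ∀ᵐ x ∂μ, G x < ⊤ := by
    have hsum : ∑' n, μ (t n) ≠ ⊤ :=
      ne_top_of_le_ne_top (by simp [ENNReal.tsum_geometric])
        (ENNReal.tsum_le_tsum fun n => (ht_lt n).le)
    filter_upwards [ae_eventually_notMem hsum] with x hx
    obtain ⟨N, hN⟩ := Filter.eventually_atTop.1 hx
    have hG : G x = ∑ n ∈ Finset.range N, (t n).indicator (fun _ => (μ (t n))⁻¹) x :=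
      tsum_eq_sum fun n hn => indicator_of_notMem (hN n (by simpa using hn)) _
    rw [hG]
    refine ENNReal.sum_lt_top.2 fun n _ => (indicator_le_self _ _ x).trans_lt ?_
    exact ENNReal.inv_lt_top.2 (ht_pos n)
  refine ⟨fun x => (G x).toNNReal, hG_meas.ennreal_toNNReal, ?_⟩
  rw [← hG_lintegral]
  exact lintegral_congr_ae (hG_finite.mono fun x hx => ENNReal.coe_toNNReal hx.ne)

theorem absolutelyContinuous_of_lintegral_lt_top [TopologicalSpace α]
    [TopologicalSpace.PseudoMetrizableSpace α] [SecondCountableTopology α] [BorelSpace α]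
    [NullSingletonClass μ] (hp : 0 < p)
    (h : ∀ g : α → ℝ≥0, Measurable g → ∫⁻ x, (g x : ℝ≥0∞) ^ p ∂ν < ⊤ → ∫⁻ x, g x ∂μ < ⊤) :
    μ ≪ ν := by
  refine Measure.AbsolutelyContinuous.mk fun N hN hνN => ?_
  have h_on (g : α → ℝ≥0) (hg : Measurable g) : ∫⁻ x in N, g x ∂μ < ⊤ := by
    have hzero : ∫⁻ x, ((N.indicator g x : ℝ≥0) : ℝ≥0∞) ^ p ∂ν = 0 := by
      refine lintegral_eq_zero_of_ae_eq_zero ?_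
      filter_upwards [measure_eq_zero_iff_ae_notMem.1 hνN] with x hx
      simp [hx, hp]
    simpa [ENNReal.coe_indicator, lintegral_indicator hN] using
      h (N.indicator g) (hg.indicator hN) (hzero.trans_lt ENNReal.zero_lt_top)
  have : IsFiniteMeasure (μ.restrict N) := ⟨by simpa using h_on 1 measurable_const⟩
  by_contra hμN
  obtain ⟨g, hg, hg_top⟩ :=
    exists_measurable_lintegral_eq_top (mt Measure.restrict_eq_zero.1 hμN)
  exact (h_on g hg).ne hg_top

theorem lintegral_lt_top_of_absolutelyContinuous (hμν : μ ≪ ν) (hp : 0 < p)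
    (h : ∀ g : α → ℝ≥0, Measurable g → ∫⁻ x, (g x : ℝ≥0∞) ^ p ∂ν < ⊤ → ∫⁻ x, g x ∂μ < ⊤)
    {g : α → ℝ≥0∞} (hg : Measurable g) (hgp : ∫⁻ x, g x ^ p ∂ν < ⊤) :
    ∫⁻ x, g x ∂μ < ⊤ := by
  have hfin : (fun x => ((g x).toNNReal : ℝ≥0∞)) =ᵐ[ν] g := by
    filter_upwards [ae_lt_top (hg.pow_const p) hgp.ne] with x hx
    exact ENNReal.coe_toNNReal ((ENNReal.rpow_lt_top_iff_of_pos hp).1 hx).ne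
  rw [← lintegral_congr_ae (hμν.ae_eq hfin)]
  refine h _ hg.ennreal_toNNReal ?_
  exact (lintegral_congr_ae (hfin.fun_comp (· ^ p))).trans_lt hgp

theorem exists_lintegral_le_of_lintegral_rpow_le_one (hp : 0 < p)
    (h : ∀ g : α → ℝ≥0∞, Measurable g → ∫⁻ x, g x ^ p ∂ν < ⊤ → ∫⁻ x, g x ∂μ < ⊤) :
    ∃ C : ℝ≥0∞, C ≠ ⊤ ∧
      ∀ g : α → ℝ≥0∞, Measurable g → ∫⁻ x, g x ^ p ∂ν ≤ 1 → ∫⁻ x, g x ∂μ ≤ C := by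
  by_contra! hcon
  set c : ℕ → ℝ≥0∞ := fun n => 2⁻¹ ^ n
  have hc_root (n : ℕ) : c n ^ p⁻¹ ≠ 0 ∧ c n ^ p⁻¹ ≠ ⊤ := by
    simp [c, hp, hp.not_gt]
  choose g hg hg_le hg_lt using fun n : ℕ =>
    hcon (n / c n ^ p⁻¹) (ENNReal.div_ne_top (ENNReal.natCast_ne_top n) (hc_root n).1)
  set S : α → ℝ≥0∞ := fun x => ∑' n, c n * g n x ^ p
  have hS : ∫⁻ x, (S x ^ p⁻¹) ^ p ∂ν < ⊤ := by
    simp_rw [ENNReal.rpow_inv_rpow hp.ne', S]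
    rw [lintegral_tsum fun n => (((hg n).pow_const p).const_mul _).aemeasurable]
    calc ∑' n, ∫⁻ x, c n * g n x ^ p ∂ν
        ≤ ∑' n, c n := ENNReal.tsum_le_tsum fun n => by
          rw [lintegral_const_mul _ ((hg n).pow_const p)]
          exact mul_le_of_le_one_right' (hg_le n)
      _ < ⊤ := by simp [c, ENNReal.tsum_geometric]
  have h_le (n : ℕ) (x : α) : c n ^ p⁻¹ * g n x ≤ S x ^ p⁻¹ := by
    rw [← ENNReal.rpow_rpow_inv hp.ne' (g n x),
      ← ENNReal.mul_rpow_of_nonneg _ _ (inv_nonneg.2 hp.le)]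
    gcongr
    exact ENNReal.le_tsum (f := fun n => c n * g n x ^ p) n
  have h_ge (n : ℕ) : (n : ℝ≥0∞) ≤ ∫⁻ x, S x ^ p⁻¹ ∂μ := calc
    (n : ℝ≥0∞) = c n ^ p⁻¹ * (n / c n ^ p⁻¹) :=
      (ENNReal.mul_div_cancel (hc_root n).1 (hc_root n).2).symm
    _ ≤ c n ^ p⁻¹ * ∫⁻ x, g n x ∂μ := by gcongr; exact (hg_lt n).le
    _ = ∫⁻ x, c n ^ p⁻¹ * g n x ∂μ := (lintegral_const_mul _ (hg n)).symm
    _ ≤ ∫⁻ x, S x ^ p⁻¹ ∂μ := lintegral_mono (h_le n)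
  have hS_meas : Measurable S := .tsum fun n => ((hg n).pow_const p).const_mul _
  obtain ⟨n, hn⟩ := ENNReal.exists_nat_gt (h _ (hS_meas.pow_const _) hS).ne
  exact (h_ge n).not_gt hn

theorem exists_lintegral_le_mul_lintegral_rpow (hp : 0 < p)
    (h : ∀ g : α → ℝ≥0∞, Measurable g → ∫⁻ x, g x ^ p ∂ν < ⊤ → ∫⁻ x, g x ∂μ < ⊤) :
    ∃ C : ℝ≥0∞, C ≠ ⊤ ∧
      ∀ g : α → ℝ≥0∞, Measurable g → ∫⁻ x, g x ∂μ ≤ C * (∫⁻ x, g x ^ p ∂ν) ^ p⁻¹ := by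
  obtain ⟨C, hC, hle⟩ := exists_lintegral_le_of_lintegral_rpow_le_one hp h
  refine ⟨C + 1, by finiteness, fun g hg => ?_⟩
  set I := ∫⁻ x, g x ^ p ∂ν
  -- The normalising factor is `⊤` when `I = 0` and `0` when `I = ⊤`; neither case is special.
  have hnormalized : ∫⁻ x, ((I ^ p⁻¹)⁻¹ * g x) ^ p ∂ν ≤ 1 := by
    simp_rw [ENNReal.mul_rpow_of_nonneg _ _ hp.le, ENNReal.inv_rpow, ENNReal.rpow_inv_rpow hp.ne']
    rw [lintegral_const_mul _ (hg.pow_const p)]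
    exact ENNReal.inv_mul_le_one I
  have hbound : (I ^ p⁻¹)⁻¹ * ∫⁻ x, g x ∂μ ≤ C + 1 := by
    rw [← lintegral_const_mul _ hg]
    exact (hle _ (hg.const_mul _) hnormalized).trans le_self_add
  rwa [mul_comm, ← div_eq_mul_inv, ENNReal.div_le_iff_le_mul (.inr (by finiteness))
    (.inr (by simp))] at hbound

end MeasureInclusion

section BergmanKernel

open scoped Topology

variable {w : ℝ → ℝ}

theorem integrableOn_pow_mul (hw : IntegrableOn w (Ico 0 1)) (k : ℕ) :
    IntegrableOn (fun r => r ^ k * w r) (Ioo 0 1) := by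
  refine (hw.mono_set Ioo_subset_Ico_self).bdd_mul (c := 1) (by fun_prop) ?_
  filter_upwards [ae_restrict_mem measurableSet_Ioo] with r hr
  rw [norm_pow, Real.norm_of_nonneg hr.1.le]
  exact pow_le_one₀ hr.1.le hr.2.le

theorem pow_mul_hatw_le_moment (hw0 : ∀ r ∈ Ico (0 : ℝ) 1, 0 ≤ w r)
    (hw : IntegrableOn w (Ico 0 1)) {r : ℝ} (hr : 0 ≤ r) (n : ℕ) :
    r ^ (2 * n + 1) * hatw w r ≤ moment w n := by
  have hsub : Ioo r 1 ⊆ Ioo 0 1 := Ioo_subset_Ioo_left hr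
  have hint := integrableOn_pow_mul hw (2 * n + 1)
  calc r ^ (2 * n + 1) * hatw w r
      = ∫ s in Ioo r 1, r ^ (2 * n + 1) * w s := (integral_const_mul _ _).symm
    _ ≤ ∫ s in Ioo r 1, s ^ (2 * n + 1) * w s := by
      have hw_int := hw.mono_set (hsub.trans Ioo_subset_Ico_self)
      refine setIntegral_mono_on (hw_int.const_mul _) (hint.mono_set hsub) measurableSet_Ioo
        fun s hs => mul_le_mul_of_nonneg_right ?_ (hw0 s (Ioo_subset_Ico_self (hsub hs)))
      exact pow_le_pow_left₀ hr hs.1.le _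
    _ ≤ moment w n := by
      refine setIntegral_mono_set hint ?_ hsub.eventuallyLE
      filter_upwards [ae_restrict_mem measurableSet_Ioo] with s hs
      exact mul_nonneg (pow_nonneg hs.1.le _) (hw0 s (Ioo_subset_Ico_self hs))

theorem IsRadialWeight.moment_pos_s1 (hw : IsRadialWeight w) (n : ℕ) : 0 < moment w n :=
  (mul_pos (by positivity) (hw.2.2 (1 / 2) (by norm_num))).trans_le
    (pow_mul_hatw_le_moment hw.1 hw.2.1 (r := 1 / 2) (by norm_num) n)

theorem norm_pow_div_moment_le (hw : IsRadialWeight w) {r : ℝ} (hr : r ∈ Ioo 0 1) (u : ℂ)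
    (n : ℕ) :
    ‖u ^ n / ((2 * moment w n : ℝ) : ℂ)‖ ≤ (‖u‖ / r ^ 2) ^ n * (2 * (r * hatw w r))⁻¹ := by
  have hr0 : 0 < r := hr.1
  have hhat : 0 < hatw w r := hw.2.2 r ⟨hr.1.le, hr.2⟩
  have hm := hw.moment_pos_s1 n
  rw [norm_div, norm_pow, Complex.norm_of_nonneg (by positivity), div_pow, ← div_eq_mul_inv,
    div_div]
  refine div_le_div_of_nonneg_left (by positivity) (by positivity) ?_
  calc (r ^ 2) ^ n * (2 * (r * hatw w r)) = 2 * (r ^ (2 * n + 1) * hatw w r) := by ring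
    _ ≤ 2 * moment w n := by gcongr; exact pow_mul_hatw_le_moment hw.1 hw.2.1 hr0.le n

theorem Bker_eq_Bker_one (w : ℝ → ℝ) (z ζ : ℂ) :
    Bker w z ζ = Bker w 1 ((starRingEnd ℂ) z * ζ) := by
  simp [Bker]

theorem continuousOn_Bker_one (hw : IsRadialWeight w) :
    ContinuousOn (Bker w 1) (ball 0 1) := by
  intro u hu
  obtain ⟨t, hut, ht⟩ := exists_between (mem_ball_zero_iff.1 hu)
  obtain ⟨s, hts, hs⟩ := exists_between ht
  have ht0 : 0 ≤ t := (norm_nonneg u).trans hut.le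
  have hs0 : 0 < s := ht0.trans_lt hts
  have hsqrt : √s ∈ Ioo 0 1 := ⟨Real.sqrt_pos.2 hs0, (Real.sqrt_lt' one_pos).2 (by simpa)⟩
  have hhat : 0 < hatw w √s := hw.2.2 _ (Ioo_subset_Ico_self hsqrt)
  have hcont : ContinuousOn (Bker w 1) (ball 0 t) := by
    have hseries : Bker w 1 = fun x => ∑' n, x ^ n / ((2 * moment w n : ℝ) : ℂ) := by
      ext x
      simp only [Bker, map_one, one_mul]
    rw [hseries]
    refine continuousOn_tsum (u := fun n => (t / s) ^ n * (2 * (√s * hatw w √s))⁻¹)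
      (fun n => by fun_prop) ?_ fun n x hx => ?_
    · exact (summable_geometric_of_lt_one (by positivity) ((div_lt_one hs0).2 hts)).mul_right _
    · have hterm := norm_pow_div_moment_le hw hsqrt x n
      rw [Real.sq_sqrt hs0.le] at hterm
      refine hterm.trans ?_
      gcongr
      exact (mem_ball_zero_iff.1 hx).le
  exact (hcont.continuousAt (isOpen_ball.mem_nhds (by simpa using hut))).continuousWithinAt

theorem Bker_zero_right (w : ℝ → ℝ) (z : ℂ) :
    Bker w z 0 = ((2 * moment w 0 : ℝ) : ℂ)⁻¹ := by
  rw [Bker, tsum_eq_single 0 fun n hn => by simp [hn]]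
  simp

theorem exists_eventually_le_norm_Bker (hw : IsRadialWeight w) :
    ∃ c > 0, ∀ᶠ z in 𝓝 (0 : ℂ), ∀ ζ ∈ ball (0 : ℂ) 1, c ≤ ‖Bker w z ζ‖ := by
  have hpos : 0 < ‖Bker w 1 0‖ := by
    have := (hw.moment_pos_s1 0).ne'
    rw [Bker_zero_right, norm_pos_iff]
    exact_mod_cast inv_ne_zero (mul_ne_zero two_ne_zero this)
  obtain ⟨c, hc, hc_lt⟩ := exists_between hpos
  have hcont : ContinuousAt (Bker w 1) 0 :=
    (continuousOn_Bker_one hw).continuousAt (ball_mem_nhds 0 one_pos)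
  obtain ⟨ε, hε, hball⟩ := Metric.eventually_nhds_iff_ball.1 (hcont.norm.eventually_const_lt hc_lt)
  refine ⟨c, hc, Metric.eventually_nhds_iff_ball.2 ⟨ε, hε, fun z hz ζ hζ => ?_⟩⟩
  rw [Bker_eq_Bker_one]
  refine (hball _ ?_).le
  rw [mem_ball_zero_iff] at hz hζ ⊢
  rw [norm_mul, RCLike.norm_conj]
  exact (mul_le_of_le_one_right (norm_nonneg z) hζ.le).trans_lt hz

theorem L1w_lt_top_of_ae_lintegral_Bker (hw : IsRadialWeight w) {f : ℂ → ℂ}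
    (hf : ∀ᵐ z ∂(volume.restrict (ball (0 : ℂ) 1)),
      ∫⁻ ζ in ball (0 : ℂ) 1, ENNReal.ofReal (‖f ζ‖ * ‖Bker w z ζ‖ * w ‖ζ‖) < ⊤) :
    L1w w f < ⊤ := by
  obtain ⟨c, hc, hB⟩ := exists_eventually_le_norm_Bker hw
  obtain ⟨z, hfz, hBz, hz⟩ := (Measure.dense_of_ae (ae_imp_of_ae_restrict hf)).inter_nhds_nonempty
    (hB.and (ball_mem_nhds 0 one_pos))
  have hlt : ENNReal.ofReal c * ∫⁻ ζ in ball (0 : ℂ) 1, ENNReal.ofReal (‖f ζ‖ * w ‖ζ‖) < ⊤ := by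
    rw [← lintegral_const_mul' _ _ ENNReal.ofReal_ne_top]
    refine (setLIntegral_mono' measurableSet_ball fun ζ hζ => ?_).trans_lt (hfz hz)
    have hwζ : 0 ≤ w ‖ζ‖ := hw.1 _ ⟨norm_nonneg ζ, mem_ball_zero_iff.1 hζ⟩
    rw [← ENNReal.ofReal_mul hc.le, mul_right_comm, mul_comm c]
    gcongr
    exact hBz ζ hζ
  exact ENNReal.div_lt_top (ENNReal.lt_top_of_mul_ne_top_right hlt.ne (by simpa using hc)).ne
    (by simp [Real.pi_pos])

end BergmanKernel

section WeightedArea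

theorem quasiMeasurePreserving_norm {E : Type*} [NormedAddCommGroup E] [NormedSpace ℝ E]
    [FiniteDimensional ℝ E] [Nontrivial E] [MeasurableSpace E] [BorelSpace E] (μ : Measure E)
    [μ.IsAddHaarMeasure] : Measure.QuasiMeasurePreserving (fun x : E => ‖x‖) μ volume := by
  refine ⟨measurable_norm, Measure.AbsolutelyContinuous.mk fun s hs hs0 => ?_⟩
  have hzero : (fun y : ℝ => y ^ (Module.finrank ℝ E - 1) • s.indicator (1 : ℝ → ℝ) y)
      =ᵐ[volume.restrict (Ioi 0)] 0 := by
    filter_upwards [ae_restrict_of_ae (measure_eq_zero_iff_ae_notMem.1 hs0)] with y hy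
    simp [hy]
  have hint : Integrable (fun x : E => s.indicator (1 : ℝ → ℝ) ‖x‖) μ :=
    (integrable_fun_norm_addHaar μ).2 ((integrable_zero _ _ _).congr hzero.symm)
  have hintegral : ∫ x : E, s.indicator (1 : ℝ → ℝ) ‖x‖ ∂μ = 0 := by
    rw [integral_fun_norm_addHaar, integral_congr_ae hzero]
    simp
  rw [integral_eq_zero_iff_of_nonneg (fun x => indicator_nonneg (by simp) _) hint] at hintegral
  rw [Measure.map_apply measurable_norm hs, measure_eq_zero_iff_ae_notMem]
  filter_upwards [hintegral] with x hx hxs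
  exact one_ne_zero ((indicator_of_mem hxs 1).symm.trans hx)

/-- The measure `ω dA` on the unit disc, `dA` being normalised to total mass one, against which the
norms of `L^p_ω` and `L¹_ω` are ordinary Lebesgue integrals. The density is really `|ω|`. -/
def weightedArea (w : ℝ → ℝ) : Measure ℂ :=
  (volume.restrict (ball 0 1)).withDensity fun z => ‖w ‖z‖‖ₑ / ENNReal.ofReal Real.pi

instance (w : ℝ → ℝ) : NullSingletonClass (weightedArea w) :=
  inferInstanceAs (NullSingletonClass (Measure.withDensity _ _))

variable {w : ℝ → ℝ} {f : ℂ → ℂ} {p : ℝ}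

theorem lintegral_weightedArea (hw : AEMeasurable w (volume.restrict (Ico 0 1))) {g : ℂ → ℝ≥0∞}
    (hg : Measurable g) :
    ∫⁻ z, g z ∂weightedArea w = (∫⁻ z in ball 0 1, g z * ‖w ‖z‖‖ₑ) / ENNReal.ofReal Real.pi := by
  have hnorm : Measure.QuasiMeasurePreserving (fun z : ℂ => ‖z‖)
      (volume.restrict (ball 0 1)) (volume.restrict (Ico 0 1)) :=
    (quasiMeasurePreserving_norm volume).restrict fun z hz =>
      ⟨norm_nonneg z, mem_ball_zero_iff.1 hz⟩
  have hw_norm : AEMeasurable (fun z : ℂ => ‖w ‖z‖‖ₑ) (volume.restrict (ball 0 1)) :=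
    (hw.comp_quasiMeasurePreserving hnorm).enorm
  rw [weightedArea, lintegral_withDensity_eq_lintegral_mul₀ (hw_norm.div_const _) hg.aemeasurable,
    div_eq_mul_inv, ← lintegral_mul_const'' _ (by fun_prop)]
  refine lintegral_congr fun z => ?_
  rw [Pi.mul_apply, div_eq_mul_inv, mul_comm, mul_assoc]

theorem LpC_eq_lintegral (hw0 : ∀ r ∈ Ico (0 : ℝ) 1, 0 ≤ w r)
    (hw : AEMeasurable w (volume.restrict (Ico 0 1))) (hp : 0 ≤ p) (hf : Measurable f) :
    LpC p w f = (∫⁻ z, ‖f z‖ₑ ^ p ∂weightedArea w) ^ p⁻¹ := by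
  rw [lintegral_weightedArea hw (hf.enorm.pow_const p), LpC, one_div]
  congr 2
  refine setLIntegral_congr_fun measurableSet_ball fun z hz => ?_
  have hwz : 0 ≤ w ‖z‖ := hw0 _ ⟨norm_nonneg z, mem_ball_zero_iff.1 hz⟩
  simp only [ENNReal.ofReal_mul (Real.rpow_nonneg (norm_nonneg (f z)) p),
    ← ENNReal.ofReal_rpow_of_nonneg (norm_nonneg (f z)) hp, ofReal_norm,
    Real.enorm_of_nonneg hwz]

theorem L1w_eq_LpC_one (w : ℝ → ℝ) (f : ℂ → ℂ) : L1w w f = LpC 1 w f := by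
  simp [L1w, LpC]

theorem L1w_eq_lintegral (hw0 : ∀ r ∈ Ico (0 : ℝ) 1, 0 ≤ w r)
    (hw : AEMeasurable w (volume.restrict (Ico 0 1))) (hf : Measurable f) :
    L1w w f = ∫⁻ z, ‖f z‖ₑ ∂weightedArea w := by
  simp [L1w_eq_LpC_one, LpC_eq_lintegral hw0 hw zero_le_one hf]

end WeightedArea

theorem exists_L1w_le_mul_LpC_of_forall_lt_top {p : ℝ} (hp : 0 < p) {w v : ℝ → ℝ}
    (hw0 : ∀ r ∈ Ico (0 : ℝ) 1, 0 ≤ w r) (hw : AEMeasurable w (volume.restrict (Ico 0 1)))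
    (hv0 : ∀ r ∈ Ico (0 : ℝ) 1, 0 ≤ v r) (hv : AEMeasurable v (volume.restrict (Ico 0 1)))
    (h : ∀ f : ℂ → ℂ, Measurable f → LpC p v f < ⊤ → L1w w f < ⊤) :
    ∃ C > (0 : ℝ), ∀ f : ℂ → ℂ, Measurable f → L1w w f ≤ ENNReal.ofReal C * LpC p v f := by
  have h_nnreal (g : ℂ → ℝ≥0) (hg : Measurable g)
      (hgp : ∫⁻ z, (g z : ℝ≥0∞) ^ p ∂weightedArea v < ⊤) :
      ∫⁻ z, g z ∂weightedArea w < ⊤ := by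
    have hf : Measurable fun z => ((g z : ℝ) : ℂ) := by fun_prop
    have hfg (z : ℂ) : ‖((g z : ℝ) : ℂ)‖ₑ = g z := by simp [enorm_eq_nnnorm]
    have := h _ hf
    simp only [L1w_eq_lintegral hw0 hw hf, LpC_eq_lintegral hv0 hv hp.le hf, hfg] at this
    exact this (ENNReal.rpow_lt_top_of_nonneg (inv_nonneg.2 hp.le) hgp.ne)
  have hac := absolutelyContinuous_of_lintegral_lt_top hp h_nnreal
  obtain ⟨C, hC, hle⟩ := exists_lintegral_le_mul_lintegral_rpow hp fun _ =>
    lintegral_lt_top_of_absolutelyContinuous hac hp h_nnreal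
  refine ⟨C.toReal + 1, by positivity, fun f hf => ?_⟩
  rw [L1w_eq_lintegral hw0 hw hf, LpC_eq_lintegral hv0 hv hp.le hf]
  refine (hle _ hf.enorm).trans ?_
  gcongr
  exact (ENNReal.le_ofReal_iff_toReal_le hC (by positivity)).2 (by linarith)

theorem Lp_embeds_in_L1_general (p : ℝ) (hp : 0 < p) (w v : ℝ → ℝ)
    (hw : IsRadialWeight w) (hv0 : ∀ r ∈ Ico (0 : ℝ) 1, 0 ≤ v r)
    (hv : AEMeasurable v (volume.restrict (Ico 0 1)))
    (hconv : ∀ f : ℂ → ℂ, Measurable f → LpC p v f < ⊤ →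
      ∀ᵐ z ∂(volume.restrict (ball (0 : ℂ) 1)),
        ∫⁻ ζ in ball (0 : ℂ) 1, ENNReal.ofReal (‖f ζ‖ * ‖Bker w z ζ‖ * w ‖ζ‖) < ⊤) :
    (∀ f : ℂ → ℂ, Measurable f → LpC p v f < ⊤ → L1w w f < ⊤) ∧
      ∃ C > (0 : ℝ), ∀ f : ℂ → ℂ, Measurable f → LpC p v f < ⊤ →
        L1w w f ≤ ENNReal.ofReal C * LpC p v f := by
  have hsub (f : ℂ → ℂ) (hf : Measurable f) (hfp : LpC p v f < ⊤) : L1w w f < ⊤ :=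
    L1w_lt_top_of_ae_lintegral_Bker hw (hconv f hf hfp)
  obtain ⟨C, hC, hle⟩ := exists_L1w_le_mul_LpC_of_forall_lt_top hp hw.1
    hw.2.1.aemeasurable hv0 hv hsub
  exact ⟨hsub, C, hC, fun f hf _ => hle f hf⟩

/-- Let `1 < p < ∞` and let `ω` and `ν` be radial weights. Suppose that for
every `f ∈ L^p_ν` the integral `∫_𝔻 |f(ζ)| |B_z^ω(ζ)| ω(ζ) dA(ζ)` is finite for almost every
`z ∈ 𝔻`. Then `L^p_ν ⊆ L¹_ω`, and there is a constant `C > 0` such that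
`‖f‖_{L¹_ω} ≤ C ‖f‖_{L^p_ν}` for every `f ∈ L^p_ν`. -/
theorem Lp_embeds_in_L1 (p : ℝ) (hp : 1 < p) (w v : ℝ → ℝ)
    (hw : IsRadialWeight w) (hv : IsRadialWeight v)
    (hconv : ∀ f : ℂ → ℂ, Measurable f → LpC p v f < ⊤ →
      ∀ᵐ z ∂(volume.restrict (Metric.ball (0:ℂ) 1)),
        (∫⁻ ζ in Metric.ball (0:ℂ) 1, ENNReal.ofReal (‖f ζ‖ * ‖Bker w z ζ‖ * w ‖ζ‖)) < ⊤) :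
    (∀ f : ℂ → ℂ, Measurable f → LpC p v f < ⊤ → L1w w f < ⊤) ∧
      ∃ C > (0:ℝ), ∀ f : ℂ → ℂ, Measurable f → LpC p v f < ⊤ →
        L1w w f ≤ ENNReal.ofReal C * LpC p v f :=
  Lp_embeds_in_L1_general p (zero_lt_one.trans hp) w v hw hv.1 hv.2.1.aemeasurable hconv

end
end
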